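/- Let n ≥ 2, m ≥ 1, and let Ω = ℝⁿ \ Ḡ, where G is a convex domain in ℝⁿ. If u = (u_1, …, u_m) is a vector-valued function with m bounded harmonic components in Ω, then for every point x ∈ Ω, max_{|ℓ|=1} |(ℓ, ∇)u(x)| ≤ (C_n / d_x) · sup_Ω |u|, where C_n = 4(n−1)^{(n−1)/2} ω_{n−1} / (n^{n/2} ω_n). -/

import Mathlib

open MeasureTheory Real Filter Metric
open scoped Real RealInnerProductSpace

noncomputable section

/-- `Eu n` is the Euclidean space `ℝⁿ`. -/
abbrev Eu (n : ℕ) := EuclideanSpace ℝ (Fin n)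

/-- `ω_n`: the surface area of the unit sphere `S^{n-1}` in `ℝⁿ`,
given by the classical formula `2 π^{n/2} / Γ(n/2)`. -/
def sphereArea (n : ℕ) : ℝ := 2 * π ^ ((n : ℝ) / 2) / Real.Gamma ((n : ℝ) / 2)

/-- A function is harmonic on a set: it is twice continuously differentiable
there and its Laplacian (the sum of the pure second partial derivatives in the
coordinate directions) vanishes at every point of the set. -/
def IsHarmonicOn {n : ℕ} (u : Eu n → ℝ) (Ω : Set (Eu n)) : Prop :=
  ContDiffOn ℝ 2 u Ω ∧ ∀ x ∈ Ω,
    ∑ i, fderiv ℝ (fun y => fderiv ℝ u y (EuclideanSpace.single i 1)) x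
      (EuclideanSpace.single i 1) = 0

/-- The constant `C_n = 4 (n-1)^{(n-1)/2} ω_{n-1} / (n^{n/2} ω_n)`. -/
def Cconst (n : ℕ) : ℝ :=
  4 * ((n : ℝ) - 1) ^ (((n : ℝ) - 1) / 2) * sphereArea (n - 1) /
    ((n : ℝ) ^ ((n : ℝ) / 2) * sphereArea n)

section Part2
open scoped Topology

/-- Symmetric second differences converge to the second derivative. -/
lemma sd_limit (f f' : ℝ → ℝ) (L : ℝ) (hf : ∀ᶠ s in 𝓝 (0:ℝ), HasDerivAt f (f' s) s)
    (hf' : HasDerivAt f' L 0) :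
    Tendsto (fun h => (f h + f (-h) - 2 * f 0) / h ^ 2) (𝓝[≠] 0) (𝓝 L) := by
  have hneg : ∀ᶠ s in 𝓝 (0:ℝ), HasDerivAt f (f' (-s)) (-s) := by
    have : Tendsto (fun s : ℝ => -s) (𝓝 0) (𝓝 0) := by
      simpa using (continuous_neg (G := ℝ)).tendsto 0
    exact this.eventually hf
  refine HasDerivAt.lhopital_zero_nhdsNE (f' := fun h => f' h - f' (-h)) (g' := fun h => 2 * h)
    ?_ ?_ ?_ ?_ ?_ ?_
  · refine eventually_nhdsWithin_of_eventually_nhds ?_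
    filter_upwards [hf, hneg] with s h1 h2
    have h3 : HasDerivAt (fun h => f (-h)) (f' (-s) * (-1)) s :=
      HasDerivAt.comp s h2 (hasDerivAt_neg s)
    have := (h1.add h3).sub_const (2 * f 0)
    refine this.congr_deriv (by ring)
  · refine Eventually.of_forall fun s => ?_
    simpa using hasDerivAt_pow 2 s
  · filter_upwards [self_mem_nhdsWithin] with s hs
    simpa using hs
  · have h0 : HasDerivAt f (f' 0) 0 := hf.self_of_nhds
    have hc : ContinuousAt f 0 := h0.continuousAt
    have hc2 : ContinuousAt (fun h => f (-h)) 0 := by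
      apply ContinuousAt.comp (g := f)
      · simpa using hc
      · exact continuous_neg.continuousAt
    have := ((hc.add hc2).sub (continuousAt_const (y := 2 * f 0))).tendsto
    have h4 : f 0 + f (-0) - 2 * f 0 = 0 := by simp; ring
    simp only [Pi.add_apply, Pi.sub_apply] at this
    rw [h4] at this
    exact this.mono_left nhdsWithin_le_nhds
  · have : ContinuousAt (fun h : ℝ => h ^ 2) 0 := by fun_prop
    have := this.tendsto
    simp only [ne_eq, OfNat.ofNat_ne_zero, not_false_eq_true, zero_pow] at this
    exact this.mono_left nhdsWithin_le_nhds
  · have h3 : HasDerivAt (fun h => f' (-h)) (L * (-1)) 0 := by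
      have hf0 : HasDerivAt f' L (-0) := by simpa using hf'
      exact HasDerivAt.comp (0:ℝ) hf0 (hasDerivAt_neg 0)
    have h4 := (hf'.sub h3).tendsto_slope
    have h5 := h4.const_mul (1/2)
    have h6 : 1 / 2 * (L - L * (-1)) = L := by ring
    rw [h6] at h5
    refine h5.congr' ?_
    filter_upwards [self_mem_nhdsWithin] with s hs
    have : s ≠ 0 := by simpa using hs
    simp [slope_def_field]
    field_simp

/-- Bound for symmetric second differences. -/
lemma sd_bound (f f' f'' : ℝ → ℝ) (h C : ℝ) (hh : 0 ≤ h)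
    (hf : ∀ s, |s| ≤ h → HasDerivAt f (f' s) s)
    (hf' : ∀ s, |s| ≤ h → HasDerivAt f' (f'' s) s)
    (hC : ∀ s, |s| ≤ h → |f'' s| ≤ C) :
    |f h + f (-h) - 2 * f 0| ≤ 2 * C * h ^ 2 := by
  have hC0 : 0 ≤ C := (abs_nonneg _).trans (hC 0 (by simpa using hh))
  have e1 : ∀ s ∈ Set.Icc (0:ℝ) h, |f' s - f' (-s)| ≤ 2 * C * h := by
    intro s hs
    have := Convex.norm_image_sub_le_of_norm_hasDerivWithin_le (s := Set.Icc (-h) h) (f := f')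
      (f' := f'') (C := C) (x := -s) (y := s)
      (fun x hx => (hf' x (abs_le.2 hx)).hasDerivWithinAt) (fun x hx => hC x (abs_le.2 hx))
      (convex_Icc _ _) ⟨by linarith [hs.2], by linarith [hs.1]⟩ ⟨by linarith [hs.1], hs.2⟩
    rw [Real.norm_eq_abs, Real.norm_eq_abs] at this
    refine this.trans ?_
    have : |s - -s| ≤ 2 * h := by
      rw [abs_of_nonneg (by linarith [hs.1])]; linarith [hs.2]
    nlinarith
  have := Convex.norm_image_sub_le_of_norm_hasDerivWithin_le (s := Set.Icc 0 h)
      (f := fun s => f s + f (-s))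
      (f' := fun s => f' s - f' (-s)) (C := 2 * C * h) (x := 0) (y := h)
      (fun x hx => ?_) (fun x hx => e1 x hx)
      (convex_Icc _ _) ⟨le_rfl, hh⟩ ⟨hh, le_rfl⟩
  · rw [Real.norm_eq_abs, Real.norm_eq_abs] at this
    have h2 : f h + f (-h) - 2 * f 0 = f h + f (-h) - (f 0 + f (-0)) := by simp; ring
    rw [h2]
    refine this.trans ?_
    rw [abs_of_nonneg (by linarith)]
    nlinarith
  · have hx' : |x| ≤ h := by rw [abs_of_nonneg hx.1]; exact hx.2
    have h1 := hf x hx'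
    have h2 := hf (-x) (by rwa [abs_neg])
    have h3 : HasDerivAt (fun h => f (-h)) (f' (-x) * (-1)) x :=
      HasDerivAt.comp x h2 (hasDerivAt_neg x)
    exact ((h1.add h3).congr_deriv (by ring)).hasDerivWithinAt

/-- A C² function: second difference quotients along a line. -/
lemma sd_contDiff {E : Type*} [NormedAddCommGroup E] [NormedSpace ℝ E] (v : E → ℝ) (Ω : Set E)
    (hΩ : IsOpen Ω) (hv : ContDiffOn ℝ 2 v Ω) (x : E) (hx : x ∈ Ω) (b : E) :
    Tendsto (fun h : ℝ => (v (x + h • b) + v (x - h • b) - 2 * v x) / h ^ 2) (𝓝[≠] 0)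
      (𝓝 (fderiv ℝ (fun y => fderiv ℝ v y b) x b)) := by
  have hline : ∀ s : ℝ, HasDerivAt (fun s : ℝ => x + s • b) b s := by
    intro s
    simpa using ((hasDerivAt_id s).smul_const b).const_add x
  have key := sd_limit (fun s => v (x + s • b)) (fun s => fderiv ℝ v (x + s • b) b)
    (fderiv ℝ (fun y => fderiv ℝ v y b) x b) ?_ ?_
  · simpa [sub_eq_add_neg] using key
  · have : Tendsto (fun s : ℝ => x + s • b) (𝓝 0) (𝓝 x) := by
      have : Continuous (fun s : ℝ => x + s • b) := by fun_prop
      simpa using this.tendsto 0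
    filter_upwards [this.eventually (hΩ.mem_nhds hx)] with s hs
    have hd : DifferentiableAt ℝ v (x + s • b) :=
      (hv.differentiableOn (by norm_num)).differentiableAt (hΩ.mem_nhds hs)
    exact hd.hasFDerivAt.comp_hasDerivAt s (hline s)
  · have h1 : ContDiffOn ℝ 1 (fun y => fderiv ℝ v y) Ω :=
      hv.fderiv_of_isOpen hΩ (by norm_num)
    have h2 : DifferentiableAt ℝ (fun y => fderiv ℝ v y b) x := by
      have := (h1.differentiableOn (by norm_num)).differentiableAt (hΩ.mem_nhds hx)
      exact this.clm_apply (differentiableAt_const b)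
    have h3 : HasFDerivAt (fun y => fderiv ℝ v y b) (fderiv ℝ (fun y => fderiv ℝ v y b) x)
      (x + (0:ℝ) • b) := by simpa using h2.hasFDerivAt
    exact h3.comp_hasDerivAt (0:ℝ) (hline 0)

end Part2

section Part3
open scoped Topology

section Kernel
variable {E : Type*} [NormedAddCommGroup E] [InnerProductSpace ℝ E]

/-- Unnormalised Poisson kernel. -/
def pk (e : E) (N : ℝ) (z : E) : ℝ := ⟪e, z⟫ * (‖z‖ ^ 2) ^ (-N / 2)

/-- First directional derivative of the kernel. -/
def pk1 (e : E) (N : ℝ) (b z : E) : ℝ :=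
  ⟪e, b⟫ * (‖z‖ ^ 2) ^ (-N / 2) - N * ⟪e, z⟫ * ⟪z, b⟫ * (‖z‖ ^ 2) ^ (-N / 2 - 1)

/-- Second directional derivative of the kernel. -/
def pk2 (e : E) (N : ℝ) (b z : E) : ℝ :=
  -2 * N * ⟪e, b⟫ * ⟪z, b⟫ * (‖z‖ ^ 2) ^ (-N / 2 - 1)
    - N * ⟪e, z⟫ * ⟪b, b⟫ * (‖z‖ ^ 2) ^ (-N / 2 - 1)
    + N * (N + 2) * ⟪e, z⟫ * ⟪z, b⟫ ^ 2 * (‖z‖ ^ 2) ^ (-N / 2 - 2)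

lemma hasDerivAt_line_inner (e z b : E) (s : ℝ) :
    HasDerivAt (fun s : ℝ => ⟪e, z + s • b⟫) ⟪e, b⟫ s := by
  simp only [inner_add_right, inner_smul_right]
  simpa using ((hasDerivAt_id s).mul_const ⟪e, b⟫).const_add ⟪e, z⟫

lemma hasDerivAt_line_inner' (z b : E) (s : ℝ) :
    HasDerivAt (fun s : ℝ => ⟪z + s • b, b⟫) ⟪b, b⟫ s := by
  simp only [inner_add_left, inner_smul_left]
  simpa using ((hasDerivAt_id s).mul_const ⟪b, b⟫).const_add ⟪z, b⟫

lemma hasDerivAt_line_normsq (z b : E) (s : ℝ) :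
    HasDerivAt (fun s : ℝ => ‖z + s • b‖ ^ 2) (2 * ⟪z + s • b, b⟫) s := by
  have h : HasDerivAt (fun s : ℝ => z + s • b) b s := by
    simpa using ((hasDerivAt_id s).smul_const b).const_add z
  exact h.norm_sq

lemma hasDerivAt_line_rpow (z b : E) (s q : ℝ) (hz : z + s • b ≠ 0) :
    HasDerivAt (fun s : ℝ => (‖z + s • b‖ ^ 2) ^ q)
      (2 * q * ⟪z + s • b, b⟫ * (‖z + s • b‖ ^ 2) ^ (q - 1)) s := by
  have h0 : ‖z + s • b‖ ^ 2 ≠ 0 := by positivity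
  refine ((hasDerivAt_line_normsq z b s).rpow_const (p := q) (Or.inl h0)).congr_deriv ?_
  ring

lemma hasDerivAt_pk (e : E) (N : ℝ) (b z : E) (s : ℝ) (hz : z + s • b ≠ 0) :
    HasDerivAt (fun s : ℝ => pk e N (z + s • b)) (pk1 e N b (z + s • b)) s := by
  refine ((hasDerivAt_line_inner e z b s).mul
    (hasDerivAt_line_rpow z b s (-N / 2) hz)).congr_deriv ?_
  unfold pk1
  ring

lemma hasDerivAt_pk1 (e : E) (N : ℝ) (b z : E) (s : ℝ) (hz : z + s • b ≠ 0) :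
    HasDerivAt (fun s : ℝ => pk1 e N b (z + s • b)) (pk2 e N b (z + s • b)) s := by
  refine (((hasDerivAt_line_rpow z b s (-N / 2) hz).const_mul ⟪e, b⟫).sub
    ((((hasDerivAt_line_inner e z b s).const_mul N).mul (hasDerivAt_line_inner' z b s)).mul
    (hasDerivAt_line_rpow z b s (-N / 2 - 1) hz))).congr_deriv ?_
  unfold pk2
  have : -N / 2 - 1 - 1 = -N / 2 - 2 := by ring
  rw [this]
  simp only [Pi.mul_apply]
  ring

lemma rpow_sub_one_eq (z : E) (q : ℝ) (hz : z ≠ 0) :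
    (‖z‖ ^ 2) ^ (q - 1) = (‖z‖ ^ 2) ^ q / ‖z‖ ^ 2 := by
  rw [Real.rpow_sub_one (by positivity)]

lemma pk1_bound (e : E) (N : ℝ) (hN : 0 ≤ N) (b z : E) (he : ‖e‖ = 1) (hb : ‖b‖ = 1)
    (hz : z ≠ 0) : |pk1 e N b z| ≤ (1 + N) * (‖z‖ ^ 2) ^ (-N / 2) := by
  unfold pk1
  rw [rpow_sub_one_eq z _ hz]
  have hp : 0 < ‖z‖ := norm_pos_iff.2 hz
  set R := (‖z‖ ^ 2) ^ (-N / 2) with hR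
  have hR0 : 0 ≤ R := by positivity
  have h1 : |⟪e, b⟫| ≤ 1 := by simpa [he, hb] using abs_real_inner_le_norm e b
  have h2 : |⟪e, z⟫| ≤ ‖z‖ := by simpa [he] using abs_real_inner_le_norm e z
  have h3 : |⟪z, b⟫| ≤ ‖z‖ := by simpa [hb] using abs_real_inner_le_norm z b
  calc |⟪e, b⟫ * R - N * ⟪e, z⟫ * ⟪z, b⟫ * (R / ‖z‖ ^ 2)|
      ≤ |⟪e, b⟫ * R| + |N * ⟪e, z⟫ * ⟪z, b⟫ * (R / ‖z‖ ^ 2)| := abs_sub _ _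
    _ = |⟪e, b⟫| * R + N * |⟪e, z⟫| * |⟪z, b⟫| * (R / ‖z‖ ^ 2) := by
        simp only [abs_mul, abs_of_nonneg hR0, abs_of_nonneg hN,
          abs_of_nonneg (show 0 ≤ R / ‖z‖ ^ 2 by positivity)]
    _ ≤ 1 * R + N * ‖z‖ * ‖z‖ * (R / ‖z‖ ^ 2) := by gcongr
    _ = (1 + N) * R := by field_simp

lemma pk2_bound (e : E) (N : ℝ) (hN : 0 ≤ N) (b z : E) (he : ‖e‖ = 1) (hb : ‖b‖ = 1)
    (hz : z ≠ 0) :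
    |pk2 e N b z| ≤ (2 * N + N + N * (N + 2)) * (‖z‖ ^ 2) ^ (-N / 2) / ‖z‖ := by
  unfold pk2
  have e2 : -N / 2 - 2 = -N / 2 - 1 - 1 := by ring
  rw [e2, rpow_sub_one_eq z (-N / 2 - 1) hz, rpow_sub_one_eq z (-N / 2) hz]
  have hp : 0 < ‖z‖ := norm_pos_iff.2 hz
  set R := (‖z‖ ^ 2) ^ (-N / 2) with hR
  have hR0 : 0 ≤ R := by positivity
  have h1 : |⟪e, b⟫| ≤ 1 := by simpa [he, hb] using abs_real_inner_le_norm e b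
  have h2 : |⟪e, z⟫| ≤ ‖z‖ := by simpa [he] using abs_real_inner_le_norm e z
  have h3 : |⟪z, b⟫| ≤ ‖z‖ := by simpa [hb] using abs_real_inner_le_norm z b
  have h4 : ⟪b, b⟫ = 1 := by rw [real_inner_self_eq_norm_sq, hb]; norm_num
  rw [h4]
  calc |-2 * N * ⟪e, b⟫ * ⟪z, b⟫ * (R / ‖z‖ ^ 2) - N * ⟪e, z⟫ * 1 * (R / ‖z‖ ^ 2)
        + N * (N + 2) * ⟪e, z⟫ * ⟪z, b⟫ ^ 2 * (R / ‖z‖ ^ 2 / ‖z‖ ^ 2)|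
      ≤ |-2 * N * ⟪e, b⟫ * ⟪z, b⟫ * (R / ‖z‖ ^ 2)| + |N * ⟪e, z⟫ * 1 * (R / ‖z‖ ^ 2)|
        + |N * (N + 2) * ⟪e, z⟫ * ⟪z, b⟫ ^ 2 * (R / ‖z‖ ^ 2 / ‖z‖ ^ 2)| :=
        (abs_add_le _ _).trans (by gcongr; exact abs_sub _ _)
    _ = 2 * N * |⟪e, b⟫| * |⟪z, b⟫| * (R / ‖z‖ ^ 2) + N * |⟪e, z⟫| * (R / ‖z‖ ^ 2)
        + N * (N + 2) * |⟪e, z⟫| * |⟪z, b⟫| ^ 2 * (R / ‖z‖ ^ 2 / ‖z‖ ^ 2) := by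
        simp only [abs_mul, abs_of_nonneg hN, abs_neg, abs_pow, abs_one, mul_one,
          abs_of_nonneg (show 0 ≤ N + 2 by positivity), abs_two,
          abs_of_nonneg (show 0 ≤ R / ‖z‖ ^ 2 by positivity),
          abs_of_nonneg (show 0 ≤ R / ‖z‖ ^ 2 / ‖z‖ ^ 2 by positivity)]
    _ ≤ 2 * N * 1 * ‖z‖ * (R / ‖z‖ ^ 2) + N * ‖z‖ * (R / ‖z‖ ^ 2)
        + N * (N + 2) * ‖z‖ * ‖z‖ ^ 2 * (R / ‖z‖ ^ 2 / ‖z‖ ^ 2) := by gcongr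
    _ = (2 * N + N + N * (N + 2)) * R / ‖z‖ := by field_simp

/-- The kernel is harmonic. -/
lemma sum_pk2 {ι : Type*} [Fintype ι] (e : E) (b : OrthonormalBasis ι ℝ E) (z : E) (hz : z ≠ 0) :
    ∑ i, pk2 e (Fintype.card ι) (b i) z = 0 := by
  have hp : 0 < ‖z‖ := norm_pos_iff.2 hz
  have s1 : ∑ i, ⟪e, b i⟫ * ⟪z, b i⟫ = ⟪e, z⟫ := by
    rw [← b.sum_inner_mul_inner e z]
    refine Finset.sum_congr rfl fun i _ => ?_
    rw [real_inner_comm (b i) z]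
  have s2 : ∑ i, ⟪z, b i⟫ ^ 2 = ‖z‖ ^ 2 := b.sum_sq_inner_left z
  have s3 : ∀ i, ⟪b i, b i⟫ = 1 := fun i => by
    rw [real_inner_self_eq_norm_sq, b.norm_eq_one]; norm_num
  unfold pk2
  set N : ℝ := (Fintype.card ι : ℝ) with hN
  have e2 : -N / 2 - 2 = -N / 2 - 1 - 1 := by ring
  rw [e2, rpow_sub_one_eq z (-N / 2 - 1) hz, rpow_sub_one_eq z (-N / 2) hz]
  set R := (‖z‖ ^ 2) ^ (-N / 2) with hR
  simp only [s3]
  rw [Finset.sum_add_distrib, Finset.sum_sub_distrib]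
  have a1 : ∑ i, -2 * N * ⟪e, b i⟫ * ⟪z, b i⟫ * (R / ‖z‖ ^ 2)
      = -2 * N * (R / ‖z‖ ^ 2) * ⟪e, z⟫ := by
    rw [← s1, Finset.mul_sum]
    exact Finset.sum_congr rfl fun i _ => by ring
  have a3 : ∑ i, N * (N + 2) * ⟪e, z⟫ * ⟪z, b i⟫ ^ 2 * (R / ‖z‖ ^ 2 / ‖z‖ ^ 2)
      = N * (N + 2) * ⟪e, z⟫ * (R / ‖z‖ ^ 2 / ‖z‖ ^ 2) * ‖z‖ ^ 2 := by
    rw [← s2, Finset.mul_sum]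
    exact Finset.sum_congr rfl fun i _ => by ring
  rw [a1, a3, Finset.sum_const, Finset.card_univ, nsmul_eq_mul, ← hN]
  field_simp
  ring

lemma line_norm_lower (e : E) (b z : E) (he : ‖e‖ = 1) (hb : ‖b‖ = 1) (s : ℝ)
    (hs : |s| ≤ ⟪e, z⟫ / 2) : ‖z‖ / 2 ≤ ‖z + s • b‖ := by
  have h2 : ⟪e, z⟫ ≤ ‖z‖ := by simpa [he] using real_inner_le_norm e z
  have h3 : ‖z‖ ≤ ‖z + s • b‖ + ‖s • b‖ := by
    simpa using norm_sub_le (z + s • b) (s • b)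
  rw [norm_smul, hb, Real.norm_eq_abs] at h3
  linarith

lemma line_rpow_bound (e : E) (b z : E) (he : ‖e‖ = 1) (hb : ‖b‖ = 1) (N : ℝ) (hN : 0 ≤ N) (s : ℝ)
    (hz : 0 < ⟪e, z⟫) (hs : |s| ≤ ⟪e, z⟫ / 2) :
    z + s • b ≠ 0 ∧ (‖z + s • b‖ ^ 2) ^ (-N / 2) ≤ 4 ^ (N / 2) * (‖z‖ ^ 2) ^ (-N / 2) := by
  have h1 := line_norm_lower e b z he hb s hs
  have h2 : ⟪e, z⟫ ≤ ‖z‖ := by simpa [he] using real_inner_le_norm e z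
  have h3 : 0 < ‖z + s • b‖ := by linarith
  refine ⟨norm_pos_iff.1 h3, ?_⟩
  have h4 : ‖z‖ ^ 2 / 4 ≤ ‖z + s • b‖ ^ 2 := by nlinarith [norm_nonneg z]
  calc (‖z + s • b‖ ^ 2) ^ (-N / 2) ≤ (‖z‖ ^ 2 / 4) ^ (-N / 2) := by
        apply Real.rpow_le_rpow_of_nonpos _ h4 (by linarith)
        have : 0 < ‖z‖ := by linarith
        positivity
    _ = 4 ^ (N / 2) * (‖z‖ ^ 2) ^ (-N / 2) := by
        rw [Real.div_rpow (by positivity) (by norm_num), neg_div,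
          Real.rpow_neg (by norm_num : (0:ℝ) ≤ 4), div_inv_eq_mul, mul_comm]

end Kernel

end Part3

section Part4
open scoped Topology

/-- The product `ℝ × ℝᵏ` with its Euclidean structure. -/
abbrev Wk (k : ℕ) := WithLp 2 (ℝ × Eu k)

/-- Points of `Wk k`. -/
def mkw {k : ℕ} (t : ℝ) (y : Eu k) : Wk k := WithLp.toLp 2 (t, y)

/-- The unit normal. -/
def ew (k : ℕ) : Wk k := mkw 1 0

@[simp] lemma mkw_fst {k : ℕ} (t : ℝ) (y : Eu k) : (mkw t y).fst = t := rfl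
@[simp] lemma mkw_snd {k : ℕ} (t : ℝ) (y : Eu k) : (mkw t y).snd = y := rfl

lemma mkw_eta {k : ℕ} (z : Wk k) : mkw z.fst z.snd = z := rfl

lemma inner_ew {k : ℕ} (z : Wk k) : ⟪ew k, z⟫ = z.fst := by
  simp [ew, mkw, WithLp.prod_inner_apply]

lemma norm_mkw_sq {k : ℕ} (z : Wk k) : ‖z‖ ^ 2 = z.fst ^ 2 + ‖z.snd‖ ^ 2 := by
  rw [WithLp.prod_norm_sq_eq_of_L2]; simp

lemma norm_ew (k : ℕ) : ‖ew k‖ = 1 := by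
  have : ‖ew k‖ ^ 2 = 1 := by rw [norm_mkw_sq]; simp [ew]
  nlinarith [norm_nonneg (ew k)]

lemma inner_mkw {k : ℕ} (z w : Wk k) : ⟪z, w⟫ = z.fst * w.fst + ⟪z.snd, w.snd⟫ := by
  simp [WithLp.prod_inner_apply, mul_comm]

lemma continuous_mkw {k : ℕ} : Continuous (fun p : ℝ × Eu k => mkw p.1 p.2) := by
  unfold mkw; fun_prop

lemma continuous_mkw_right {k : ℕ} (t : ℝ) : Continuous (fun y : Eu k => mkw t y) :=
  (continuous_mkw (k := k)).comp (f := fun y => (t, y)) (by fun_prop)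

lemma continuous_fstw {k : ℕ} : Continuous (fun z : Wk k => z.fst) := by fun_prop
lemma continuous_sndw {k : ℕ} : Continuous (fun z : Wk k => z.snd) := by fun_prop

/-- Standard profile. -/
lemma integrable_profile (k : ℕ) :
    Integrable (fun y : Eu k => (1 + ‖y‖ ^ 2) ^ (-((k : ℝ) + 1) / 2)) := by
  apply integrable_rpow_neg_one_add_norm_sq
  simp

lemma continuous_profile (k : ℕ) (q : ℝ) :
    Continuous (fun y : Eu k => (1 + ‖y‖ ^ 2) ^ q) := by
  refine Continuous.rpow_const (by fun_prop) fun y => Or.inl ?_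
  positivity

lemma sub_mkw_ne {k : ℕ} (z : Wk k) (hz : 0 < z.fst) (y : Eu k) : z - mkw 0 y ≠ 0 := by
  intro h
  have := congrArg (fun w : Wk k => w.fst) h
  simp at this
  linarith

lemma continuous_ker {k : ℕ} (z : Wk k) (hz : 0 < z.fst) (q : ℝ) :
    Continuous (fun y : Eu k => (‖z - mkw 0 y‖ ^ 2) ^ q) := by
  refine Continuous.rpow_const ?_ fun y => Or.inl ?_
  · have := continuous_mkw_right (k := k) 0
    fun_prop
  · have := norm_pos_iff.2 (sub_mkw_ne z hz y)
    positivity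

lemma integrable_ker {k : ℕ} (z : Wk k) (hz : 0 < z.fst) :
    Integrable (fun y : Eu k => (‖z - mkw 0 y‖ ^ 2) ^ (-((k : ℝ) + 1) / 2)) := by
  set m := min 1 (z.fst ^ 2) with hm
  have hm0 : 0 < m := lt_min one_pos (by positivity)
  have h1 := (((integrable_profile k).comp_sub_left z.snd)).const_mul (m ^ (-((k : ℝ) + 1) / 2))
  refine h1.mono' (continuous_ker z hz _).aestronglyMeasurable (Eventually.of_forall fun y => ?_)
  rw [Real.norm_of_nonneg (by positivity), ← Real.mul_rpow hm0.le (by positivity)]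
  apply Real.rpow_le_rpow_of_nonpos (by positivity) _
    (div_nonpos_of_nonpos_of_nonneg (by linarith [(k.cast_nonneg : (0:ℝ) ≤ k)]) (by norm_num))
  rw [norm_mkw_sq]
  simp only [WithLp.sub_fst, WithLp.sub_snd, mkw_fst, mkw_snd, sub_zero]
  have : m ≤ 1 := min_le_left _ _
  have : m ≤ z.fst ^ 2 := min_le_right _ _
  nlinarith [sq_nonneg ‖z.snd - y‖]

/-- Poisson integral (unnormalised). -/
def PI {k : ℕ} (g : Eu k → ℝ) (z : Wk k) : ℝ :=
  ∫ y, pk (ew k) ((k : ℝ) + 1) (z - mkw 0 y) * g y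

/-- Poisson integral in profile form. -/
def PI' {k : ℕ} (g : Eu k → ℝ) (z : Wk k) : ℝ :=
  ∫ y, (1 + ‖y‖ ^ 2) ^ (-((k : ℝ) + 1) / 2) * g (z.snd + z.fst • y)

lemma ker_scale {k : ℕ} (z : Wk k) (hz : 0 < z.fst) (y : Eu k) (q : ℝ) :
    (‖z - mkw 0 (z.snd + z.fst • y)‖ ^ 2) ^ q = z.fst ^ (2 * q) * (1 + ‖y‖ ^ 2) ^ q := by
  rw [norm_mkw_sq]
  simp only [WithLp.sub_fst, WithLp.sub_snd, mkw_fst, mkw_snd, sub_zero]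
  have : z.fst ^ 2 + ‖z.snd - (z.snd + z.fst • y)‖ ^ 2 = z.fst ^ 2 * (1 + ‖y‖ ^ 2) := by
    rw [sub_add_cancel_left, norm_neg, norm_smul, mul_pow, Real.norm_eq_abs, sq_abs]; ring
  rw [this, Real.mul_rpow (by positivity) (by positivity), Real.rpow_mul hz.le]
  norm_num

lemma integral_scale {k : ℕ} (f : Eu k → ℝ) (x : Eu k) (t : ℝ) (ht : 0 < t) :
    ∫ y, f y = t ^ k * ∫ y, f (x + t • y) := by
  have h1 : ∫ y, f (x + t • y) = |(t ^ k)⁻¹| • ∫ y, f (x + y) := by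
    have := Measure.integral_comp_smul (μ := (volume : Measure (Eu k))) (fun y => f (x + y)) t
    simpa using this
  rw [h1, integral_add_left_eq_self f x, abs_of_pos (by positivity), smul_eq_mul,
    mul_inv_cancel_left₀ (by positivity)]

lemma PI_eq_PI' {k : ℕ} (g : Eu k → ℝ) (z : Wk k) (hz : 0 < z.fst) : PI g z = PI' g z := by
  unfold PI PI'
  rw [integral_scale _ z.snd z.fst hz, ← integral_const_mul]
  refine integral_congr_ae (Eventually.of_forall fun y => ?_)
  simp only [pk, inner_ew, ker_scale z hz]
  simp only [WithLp.sub_fst, mkw_fst, sub_zero]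
  have : z.fst ^ k * (z.fst * z.fst ^ (2 * (-((k : ℝ) + 1) / 2))) = 1 := by
    rw [← mul_assoc, ← pow_succ, ← Real.rpow_natCast, ← Real.rpow_add hz]
    convert Real.rpow_zero _ using 2
    push_cast; ring
  linear_combination ((1 + ‖y‖ ^ 2) ^ (-((k : ℝ) + 1) / 2) * g (z.snd + z.fst • y)) * this

lemma continuous_PI' {k : ℕ} (g : Eu k → ℝ) (hg : Continuous g) (M : ℝ) (hM : ∀ y, |g y| ≤ M) :
    Continuous (PI' g) := by
  unfold PI'
  refine continuous_of_dominated (bound := fun y => (1 + ‖y‖ ^ 2) ^ (-((k : ℝ) + 1) / 2) * M)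
    ?_ ?_ ?_ ?_
  · intro z
    exact ((continuous_profile k _).mul (hg.comp (by fun_prop))).aestronglyMeasurable
  · intro z
    refine Eventually.of_forall fun y => ?_
    rw [norm_mul, Real.norm_of_nonneg (by positivity)]
    gcongr
    exact hM _
  · exact (integrable_profile k).mul_const M
  · refine Eventually.of_forall fun y => ?_
    have h1 := continuous_fstw (k := k)
    have h2 := continuous_sndw (k := k)
    fun_prop

lemma PI'_bound {k : ℕ} (g : Eu k → ℝ) (M : ℝ) (hM : ∀ y, |g y| ≤ M) (z : Wk k) :
    |PI' g z| ≤ M * ∫ y : Eu k, (1 + ‖y‖ ^ 2) ^ (-((k : ℝ) + 1) / 2) := by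
  unfold PI'
  rw [mul_comm, ← integral_mul_const, ← Real.norm_eq_abs]
  refine norm_integral_le_of_norm_le ((integrable_profile k).mul_const M)
    (Eventually.of_forall fun y => ?_)
  rw [norm_mul, Real.norm_of_nonneg (by positivity)]
  gcongr
  exact hM _

lemma PI'_zero {k : ℕ} (g : Eu k → ℝ) (x : Eu k) :
    PI' g (mkw 0 x) = (∫ y : Eu k, (1 + ‖y‖ ^ 2) ^ (-((k : ℝ) + 1) / 2)) * g x := by
  unfold PI'
  simp [integral_mul_const]

end Part4

section Part5
open scoped Topology

lemma sd_bound_abs (f f' f'' : ℝ → ℝ) (h C : ℝ)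
    (hf : ∀ s, |s| ≤ |h| → HasDerivAt f (f' s) s)
    (hf' : ∀ s, |s| ≤ |h| → HasDerivAt f' (f'' s) s)
    (hC : ∀ s, |s| ≤ |h| → |f'' s| ≤ C) :
    |f h + f (-h) - 2 * f 0| ≤ 2 * C * h ^ 2 := by
  have := sd_bound f f' f'' |h| C (abs_nonneg h) hf hf' hC
  rcases abs_choice h with h1 | h1 <;> rw [h1] at this
  · exact this
  · rw [neg_neg, neg_sq] at this
    rw [add_comm (f h)]; exact this

lemma continuous_sub_mkw {k : ℕ} (z : Wk k) : Continuous (fun y : Eu k => z - mkw 0 y) :=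
  continuous_const.sub (continuous_mkw_right 0)

lemma continuous_pk {k : ℕ} (z : Wk k) (hz : 0 < z.fst) :
    Continuous (fun y : Eu k => pk (ew k) ((k : ℝ) + 1) (z - mkw 0 y)) := by
  unfold pk
  have h1 := continuous_ker z hz (-((k : ℝ) + 1) / 2)
  have h2 := continuous_sub_mkw z
  fun_prop

lemma continuous_pk1 {k : ℕ} (z : Wk k) (hz : 0 < z.fst) (b : Wk k) :
    Continuous (fun y : Eu k => pk1 (ew k) ((k : ℝ) + 1) b (z - mkw 0 y)) := by
  unfold pk1
  have h1 := continuous_ker z hz (-((k : ℝ) + 1) / 2)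
  have h1' := continuous_ker z hz (-((k : ℝ) + 1) / 2 - 1)
  have h2 := continuous_sub_mkw z
  fun_prop

lemma continuous_pk2 {k : ℕ} (z : Wk k) (hz : 0 < z.fst) (b : Wk k) :
    Continuous (fun y : Eu k => pk2 (ew k) ((k : ℝ) + 1) b (z - mkw 0 y)) := by
  unfold pk2
  have h1 := continuous_ker z hz (-((k : ℝ) + 1) / 2 - 2)
  have h1' := continuous_ker z hz (-((k : ℝ) + 1) / 2 - 1)
  have h2 := continuous_sub_mkw z
  fun_prop

lemma inner_ew_sub {k : ℕ} (z : Wk k) (y : Eu k) : ⟪ew k, z - mkw 0 y⟫ = z.fst := by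
  rw [inner_ew]; simp

lemma integrable_pk_mul {k : ℕ} (z : Wk k) (hz : 0 < z.fst) (g : Eu k → ℝ) (hg : Continuous g)
    (M : ℝ) (hM : ∀ y, |g y| ≤ M) :
    Integrable (fun y : Eu k => pk (ew k) ((k : ℝ) + 1) (z - mkw 0 y) * g y) := by
  refine Integrable.mono' (g := fun y => z.fst * (‖z - mkw 0 y‖ ^ 2) ^ (-((k : ℝ) + 1) / 2) * M)
    (((integrable_ker z hz).const_mul _).mul_const M)
    ((continuous_pk z hz).mul hg).aestronglyMeasurable (Eventually.of_forall fun y => ?_)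
  have h := hM y
  rw [norm_mul, pk, inner_ew_sub, norm_mul, Real.norm_of_nonneg hz.le,
    Real.norm_of_nonneg (show 0 ≤ (‖z - mkw 0 y‖ ^ 2) ^ (-((k : ℝ) + 1) / 2) by positivity)]
  gcongr
  exact h

lemma fst_line_pos {k : ℕ} (z b : Wk k) (hz : 0 < z.fst) (hb : ‖b‖ = 1) (s : ℝ)
    (hs : |s| ≤ z.fst / 2) : 0 < (z + s • b).fst := by
  have h1 : |b.fst| ≤ 1 := by
    have := abs_real_inner_le_norm (ew k) b
    rwa [inner_ew, norm_ew, hb, one_mul] at this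
  have h2 : |s * b.fst| ≤ z.fst / 2 := by
    rw [abs_mul]; nlinarith [abs_nonneg s, abs_nonneg b.fst]
  have := (abs_le.1 h2).1
  simp only [WithLp.add_fst, WithLp.smul_fst, smul_eq_mul]
  linarith

lemma PI_sd_dir {k : ℕ} (z b : Wk k) (hz : 0 < z.fst) (hb : ‖b‖ = 1) (g : Eu k → ℝ)
    (hg : Continuous g) (M : ℝ) (hM : ∀ y, |g y| ≤ M) :
    Integrable (fun y => pk2 (ew k) ((k : ℝ) + 1) b (z - mkw 0 y) * g y) ∧
    Tendsto (fun h : ℝ => (PI g (z + h • b) + PI g (z - h • b) - 2 * PI g z) / h ^ 2) (𝓝[≠] 0)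
      (𝓝 (∫ y, pk2 (ew k) ((k : ℝ) + 1) b (z - mkw 0 y) * g y)) := by
  set N : ℝ := (k : ℝ) + 1 with hN
  have hN0 : 0 ≤ N := by positivity
  set K : ℝ := (2 * N + N + N * (N + 2)) * 4 ^ (N / 2) / (z.fst / 2) with hK
  have hK0 : 0 ≤ K := by positivity
  have hev : ∀ᶠ h in 𝓝[≠] (0:ℝ), |h| ≤ z.fst / 2 := by
    refine eventually_nhdsWithin_of_eventually_nhds ?_
    have : Tendsto (fun h : ℝ => |h|) (𝓝 0) (𝓝 0) := by simpa using continuous_abs.tendsto (0:ℝ)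
    filter_upwards [this.eventually (gt_mem_nhds (show 0 < z.fst / 2 by positivity))] with h hh
    exact hh.le
  have hpk2 : ∀ (y : Eu k) (s : ℝ), |s| ≤ z.fst / 2 → (z - mkw 0 y) + s • b ≠ 0 ∧
      |pk2 (ew k) N b ((z - mkw 0 y) + s • b)| ≤ K * (‖z - mkw 0 y‖ ^ 2) ^ (-N / 2) := by
    intro y s hs
    have hs' : |s| ≤ ⟪ew k, z - mkw 0 y⟫ / 2 := by rwa [inner_ew_sub]
    have hpos : 0 < ⟪ew k, z - mkw 0 y⟫ := by rwa [inner_ew_sub]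
    obtain ⟨h1, h2⟩ := line_rpow_bound (ew k) b (z - mkw 0 y) (norm_ew k) hb N hN0 s hpos hs'
    refine ⟨h1, (pk2_bound (ew k) N hN0 b _ (norm_ew k) hb h1).trans ?_⟩
    have h3 := line_norm_lower (ew k) b (z - mkw 0 y) (norm_ew k) hb s hs'
    have h4 : z.fst ≤ ‖z - mkw 0 y‖ := by
      have := real_inner_le_norm (ew k) (z - mkw 0 y)
      rwa [inner_ew_sub, norm_ew, one_mul] at this
    have h5 : z.fst / 2 ≤ ‖(z - mkw 0 y) + s • b‖ := by linarith
    calc (2 * N + N + N * (N + 2)) * (‖(z - mkw 0 y) + s • b‖ ^ 2) ^ (-N / 2)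
          / ‖(z - mkw 0 y) + s • b‖
        ≤ (2 * N + N + N * (N + 2)) * (4 ^ (N / 2) * (‖z - mkw 0 y‖ ^ 2) ^ (-N / 2))
          / (z.fst / 2) := by gcongr
      _ = K * (‖z - mkw 0 y‖ ^ 2) ^ (-N / 2) := by rw [hK]; ring
  have hintK : Integrable (fun y : Eu k => K * (‖z - mkw 0 y‖ ^ 2) ^ (-N / 2)) :=
    (integrable_ker z hz).const_mul K
  refine ⟨?_, ?_⟩
  · refine (hintK.mul_const M).mono' ((continuous_pk2 z hz b).mul hg).aestronglyMeasurable
      (Eventually.of_forall fun y => ?_)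
    have h := hM y
    have h2 := (hpk2 y 0 (by rw [abs_zero]; positivity)).2
    rw [zero_smul, add_zero] at h2
    rw [norm_mul]
    exact mul_le_mul h2 h (abs_nonneg _) (by positivity)
  have hlim : Tendsto (fun h : ℝ => ∫ y, ((pk (ew k) N ((z - mkw 0 y) + h • b)
      + pk (ew k) N ((z - mkw 0 y) + (-h) • b)
      - 2 * pk (ew k) N ((z - mkw 0 y) + (0:ℝ) • b)) / h ^ 2) * g y) (𝓝[≠] 0)
      (𝓝 (∫ y, pk2 (ew k) N b (z - mkw 0 y) * g y)) := by
    refine tendsto_integral_filter_of_dominated_convergence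
      (fun y => 2 * (K * (‖z - mkw 0 y‖ ^ 2) ^ (-N / 2)) * M) ?_ ?_ ((hintK.const_mul 2).mul_const M) ?_
    · filter_upwards [hev] with h hh
      have c1 := continuous_pk (z + h • b) (fst_line_pos z b hz hb h hh)
      have c2 := continuous_pk (z + (-h) • b) (fst_line_pos z b hz hb (-h) (by rwa [abs_neg]))
      have c3 := continuous_pk z hz
      have e1 : ∀ (s : ℝ) (y : Eu k), (z - mkw 0 y) + s • b = z + s • b - mkw 0 y := by
        intro s y; abel
      simp only [e1, zero_smul, add_zero]
      exact ((((c1.add c2).sub (c3.const_mul 2)).div_const _).mul hg).aestronglyMeasurable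
    · filter_upwards [hev, self_mem_nhdsWithin] with h hh hh0
      refine Eventually.of_forall fun y => ?_
      have hne : h ≠ 0 := by simpa using hh0
      have key := sd_bound_abs (fun s => pk (ew k) N ((z - mkw 0 y) + s • b))
        (fun s => pk1 (ew k) N b ((z - mkw 0 y) + s • b))
        (fun s => pk2 (ew k) N b ((z - mkw 0 y) + s • b)) h
        (K * (‖z - mkw 0 y‖ ^ 2) ^ (-N / 2))
        (fun s hs => hasDerivAt_pk _ _ _ _ _ (hpk2 y s (hs.trans hh)).1)
        (fun s hs => hasDerivAt_pk1 _ _ _ _ _ (hpk2 y s (hs.trans hh)).1)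
        (fun s hs => (hpk2 y s (hs.trans hh)).2)
      rw [norm_mul, norm_div, Real.norm_eq_abs, Real.norm_of_nonneg (sq_nonneg h)]
      refine mul_le_mul ?_ (hM y) (abs_nonneg _) (by positivity)
      rw [div_le_iff₀ (by positivity)]
      exact key
    · refine Eventually.of_forall fun y => ?_
      refine Tendsto.mul_const _ ?_
      have := sd_limit (fun s => pk (ew k) N ((z - mkw 0 y) + s • b))
        (fun s => pk1 (ew k) N b ((z - mkw 0 y) + s • b))
        (pk2 (ew k) N b (z - mkw 0 y)) ?_ ?_
      · exact this
      · have : Tendsto (fun h : ℝ => |h|) (𝓝 0) (𝓝 0) := by simpa using continuous_abs.tendsto (0:ℝ)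
        filter_upwards [this.eventually (gt_mem_nhds (show 0 < z.fst / 2 by positivity))] with h hh
        exact hasDerivAt_pk _ _ _ _ _ (hpk2 y h hh.le).1
      · have := hasDerivAt_pk1 (ew k) N b (z - mkw 0 y) 0 (hpk2 y 0 (by rw [abs_zero]; positivity)).1
        simpa using this
  refine hlim.congr' ?_
  filter_upwards [hev] with h hh
  have e1 : ∀ (s : ℝ) (y : Eu k), (z - mkw 0 y) + s • b = z + s • b - mkw 0 y := by
    intro s y; abel
  have i1 := integrable_pk_mul (z + h • b) (fst_line_pos z b hz hb h hh) g hg M hM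
  have i2 := integrable_pk_mul (z + (-h) • b) (fst_line_pos z b hz hb (-h) (by rwa [abs_neg])) g hg M hM
  have i3 := integrable_pk_mul z hz g hg M hM
  simp only [e1, zero_smul, add_zero]
  unfold PI
  have e2 : z - h • b = z + (-h) • b := by rw [neg_smul]; abel
  have i12 := integral_sub (i1.add i2) (i3.const_mul 2)
  simp only [Pi.add_apply] at i12
  rw [e2, ← integral_const_mul, ← integral_add i1 i2, ← i12, ← integral_div]
  refine integral_congr_ae (Eventually.of_forall fun y => ?_)
  simp only [hN]
  ring

lemma PI_sd {k : ℕ} {ι : Type*} [Fintype ι] (b : OrthonormalBasis ι ℝ (Wk k)) (z : Wk k)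
    (hz : 0 < z.fst) (g : Eu k → ℝ)
    (hg : Continuous g) (M : ℝ) (hM : ∀ y, |g y| ≤ M) :
    Tendsto (fun h : ℝ => ∑ i, (PI g (z + h • b i) + PI g (z - h • b i) - 2 * PI g z) / h ^ 2)
      (𝓝[≠] 0) (𝓝 0) := by
  have h1 := tendsto_finsetSum Finset.univ
    (fun i _ => (PI_sd_dir z (b i) hz (b.norm_eq_one i) g hg M hM).2)
  convert! h1 using 2
  rw [← integral_finsetSum _ (fun i _ => (PI_sd_dir z (b i) hz (b.norm_eq_one i) g hg M hM).1)]
  symm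
  have hcard : (Fintype.card ι : ℝ) = (k : ℝ) + 1 := by
    have h2 : Module.finrank ℝ (Wk k) = Fintype.card ι := Module.finrank_eq_card_basis b.toBasis
    have h3 : Module.finrank ℝ (Wk k) = k + 1 := by
      rw [(WithLp.linearEquiv 2 ℝ (ℝ × Eu k)).finrank_eq, Module.finrank_prod]
      simp [add_comm]
    rw [← h2, h3]; push_cast; ring
  have h4 : ∀ y : Eu k, ∑ i, pk2 (ew k) ((k : ℝ) + 1) (b i) (z - mkw 0 y) * g y = 0 := by
    intro y
    rw [← Finset.sum_mul, ← hcard, sum_pk2 (ew k) b _ (sub_mkw_ne z hz y), zero_mul]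
  simp [h4]

lemma PI_deriv {k : ℕ} (z b : Wk k) (hz : 0 < z.fst) (hb : ‖b‖ = 1) (g : Eu k → ℝ)
    (hg : Continuous g) (M : ℝ) (hM : ∀ y, |g y| ≤ M) :
    Integrable (fun y => pk1 (ew k) ((k : ℝ) + 1) b (z - mkw 0 y)) ∧
    HasDerivAt (fun s : ℝ => PI g (z + s • b))
      (∫ y, pk1 (ew k) ((k : ℝ) + 1) b (z - mkw 0 y) * g y) 0 := by
  set N : ℝ := (k : ℝ) + 1 with hN
  have hN0 : 0 ≤ N := by positivity
  set K : ℝ := (1 + N) * 4 ^ (N / 2) with hK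
  have hK0 : 0 ≤ K := by positivity
  have hpk1 : ∀ (y : Eu k) (s : ℝ), |s| ≤ z.fst / 2 → (z - mkw 0 y) + s • b ≠ 0 ∧
      |pk1 (ew k) N b ((z - mkw 0 y) + s • b)| ≤ K * (‖z - mkw 0 y‖ ^ 2) ^ (-N / 2) := by
    intro y s hs
    have hs' : |s| ≤ ⟪ew k, z - mkw 0 y⟫ / 2 := by rwa [inner_ew_sub]
    have hpos : 0 < ⟪ew k, z - mkw 0 y⟫ := by rwa [inner_ew_sub]
    obtain ⟨h1, h2⟩ := line_rpow_bound (ew k) b (z - mkw 0 y) (norm_ew k) hb N hN0 s hpos hs'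
    refine ⟨h1, (pk1_bound (ew k) N hN0 b _ (norm_ew k) hb h1).trans ?_⟩
    rw [hK, mul_assoc]
    gcongr
  have hintK : Integrable (fun y : Eu k => K * (‖z - mkw 0 y‖ ^ 2) ^ (-N / 2)) :=
    (integrable_ker z hz).const_mul K
  refine ⟨?_, ?_⟩
  · refine hintK.mono' (continuous_pk1 z hz b).aestronglyMeasurable
      (Eventually.of_forall fun y => ?_)
    have h2 := (hpk1 y 0 (by rw [abs_zero]; positivity)).2
    rwa [zero_smul, add_zero] at h2
  have e1 : ∀ (s : ℝ) (y : Eu k), z + s • b - mkw 0 y = (z - mkw 0 y) + s • b := by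
    intro s y; abel
  have hmem : ∀ s ∈ ball (0:ℝ) (z.fst / 2), |s| ≤ z.fst / 2 := by
    intro s hs
    rw [mem_ball_zero_iff] at hs
    exact hs.le
  have := (hasDerivAt_integral_of_dominated_loc_of_deriv_le (μ := (volume : Measure (Eu k)))
    (F := fun s y => pk (ew k) N (z + s • b - mkw 0 y) * g y)
    (F' := fun s y => pk1 (ew k) N b (z + s • b - mkw 0 y) * g y) (x₀ := (0:ℝ))
    (s := ball 0 (z.fst / 2)) (bound := fun y => K * (‖z - mkw 0 y‖ ^ 2) ^ (-N / 2) * M)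
    (ball_mem_nhds _ (by positivity)) ?_ ?_ ?_ ?_ ?_ ?_).2
  · simpa [PI] using this
  · filter_upwards [ball_mem_nhds (0:ℝ) (show 0 < z.fst / 2 by positivity)] with s hs
    exact ((continuous_pk _ (fst_line_pos z b hz hb s (hmem s hs))).mul hg).aestronglyMeasurable
  · simpa using integrable_pk_mul z hz g hg M hM
  · simp only [zero_smul, add_zero]
    exact ((continuous_pk1 z hz b).mul hg).aestronglyMeasurable
  · refine Eventually.of_forall fun y s hs => ?_
    rw [norm_mul, e1]
    exact mul_le_mul (hpk1 y s (hmem s hs)).2 (hM y) (abs_nonneg _) (by positivity)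
  · exact hintK.mul_const M
  · refine Eventually.of_forall fun y s hs => ?_
    simp only [e1]
    exact (hasDerivAt_pk _ _ _ _ _ (hpk1 y s (hmem s hs)).1).mul_const _

end Part5

section Part6
open scoped Topology

lemma finrank_Wk (k : ℕ) : Module.finrank ℝ (Wk k) = k + 1 := by
  rw [(WithLp.linearEquiv 2 ℝ (ℝ × Eu k)).finrank_eq, Module.finrank_prod]
  simp [add_comm]

/-- Comparison function for the maximum principle. -/
def psi {k : ℕ} (a δ r : ℝ) (z : Wk k) : ℝ :=
  -a * ⟪ew k, z⟫ - δ * (‖z‖ ^ 2 - ((k : ℝ) + 2) * ⟪ew k, z⟫ ^ 2 + r)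

lemma psi_sd {k : ℕ} (a δ r : ℝ) (z b : Wk k) (h : ℝ) (hb : ‖b‖ = 1) :
    psi a δ r (z + h • b) + psi a δ r (z - h • b) - 2 * psi a δ r z
      = -δ * (2 * h ^ 2 - 2 * ((k : ℝ) + 2) * h ^ 2 * ⟪ew k, b⟫ ^ 2) := by
  unfold psi
  rw [norm_add_sq_real, norm_sub_sq_real, norm_smul, hb]
  simp only [inner_add_right, inner_sub_right, inner_smul_right, mul_one, Real.norm_eq_abs, sq_abs]
  ring

lemma psi_sd_sum {k : ℕ} {ι : Type*} [Fintype ι] (b : OrthonormalBasis ι ℝ (Wk k))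
    (a δ r : ℝ) (z : Wk k) (h : ℝ) (hh : h ≠ 0) :
    ∑ i, (psi a δ r (z + h • b i) + psi a δ r (z - h • b i) - 2 * psi a δ r z) / h ^ 2
      = 2 * δ := by
  have hcard : (Fintype.card ι : ℝ) = (k : ℝ) + 1 := by
    have h2 : Module.finrank ℝ (Wk k) = Fintype.card ι := Module.finrank_eq_card_basis b.toBasis
    rw [← h2, finrank_Wk]; push_cast; ring
  have h1 : ∀ i, (psi a δ r (z + h • b i) + psi a δ r (z - h • b i) - 2 * psi a δ r z) / h ^ 2
      = -2 * δ + 2 * δ * ((k : ℝ) + 2) * ⟪ew k, b i⟫ ^ 2 := by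
    intro i
    rw [psi_sd a δ r z (b i) h (b.norm_eq_one i)]
    field_simp
    ring
  have s2 : ∑ i, ⟪ew k, b i⟫ ^ 2 = ‖ew k‖ ^ 2 := b.sum_sq_inner_left (ew k)
  have s3 : ∑ i, 2 * δ * ((k : ℝ) + 2) * ⟪ew k, b i⟫ ^ 2
      = 2 * δ * ((k : ℝ) + 2) * ∑ i, ⟪ew k, b i⟫ ^ 2 := by rw [Finset.mul_sum]
  simp only [h1]
  rw [Finset.sum_add_distrib, s3, s2, norm_ew, Finset.sum_const, Finset.card_univ,
    nsmul_eq_mul, hcard]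
  ring

lemma max_principle_slab {k : ℕ} {ι : Type*} [Fintype ι] (b : OrthonormalBasis ι ℝ (Wk k))
    (D : Wk k → ℝ) (hD : ContinuousOn D {z | 0 ≤ z.fst}) (B : ℝ) (hB0 : 0 ≤ B)
    (hB : ∀ z : Wk k, 0 ≤ z.fst → D z ≤ B)
    (hzero : ∀ z : Wk k, z.fst = 0 → D z ≤ 0)
    (hsd : ∀ z : Wk k, 0 < z.fst →
      Tendsto (fun h : ℝ => ∑ i, (D (z + h • b i) + D (z - h • b i) - 2 * D z) / h ^ 2)
        (𝓝[≠] 0) (𝓝 0))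
    (T δ : ℝ) (hT : 0 < T) (hδ : 0 < δ) (z1 : Wk k) (h0 : 0 ≤ z1.fst) (h1T : z1.fst ≤ T) :
    D z1 + psi (B / T) δ (((k : ℝ) + 1) * T ^ 2) z1 ≤ 0 := by
  by_contra! hcon
  set ψ : Wk k → ℝ := psi (B / T) δ (((k : ℝ) + 1) * T ^ 2) with hψ
  have hψe : ∀ z : Wk k, ψ z = -(B / T) * z.fst
      - δ * (‖z.snd‖ ^ 2 + ((k : ℝ) + 1) * (T ^ 2 - z.fst ^ 2)) := by
    intro z
    rw [hψ, psi, inner_ew, norm_mkw_sq]; ring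
  have hk : (0:ℝ) < (k : ℝ) + 1 := by positivity
  have hψle : ∀ z : Wk k, 0 ≤ z.fst → z.fst ≤ T →
      ψ z ≤ -(B / T) * z.fst - δ * ‖z.snd‖ ^ 2 := by
    intro z hz hzT
    rw [hψe]
    have : 0 ≤ ((k : ℝ) + 1) * (T ^ 2 - z.fst ^ 2) := mul_nonneg hk.le (by nlinarith)
    nlinarith
  -- points with positive value are strictly inside
  have hinside : ∀ z : Wk k, 0 ≤ z.fst → z.fst ≤ T → 0 < D z + ψ z →
      0 < z.fst ∧ z.fst < T ∧ ‖z.snd‖ ^ 2 < B / δ + 1 := by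
    intro z hz hzT hpos
    have h1 := hψle z hz hzT
    have hBT : 0 ≤ B / T * z.fst := by positivity
    refine ⟨?_, ?_, ?_⟩
    · rcases hz.eq_or_lt with h | h
      · have := hzero z h.symm
        nlinarith [sq_nonneg ‖z.snd‖]
      · exact h
    · rcases hzT.eq_or_lt with h | h
      · have := hB z hz
        have h2 : B / T * z.fst = B := by rw [h]; field_simp
        nlinarith [sq_nonneg ‖z.snd‖]
      · exact h
    · have := hB z hz
      have h2 : δ * ‖z.snd‖ ^ 2 < B := by nlinarith
      have h3 : ‖z.snd‖ ^ 2 < B / δ := by rw [lt_div_iff₀ hδ]; linarith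
      linarith
  let S : Set (Wk k) := {z | 0 ≤ z.fst ∧ z.fst ≤ T ∧ ‖z.snd‖ ^ 2 ≤ B / δ + 1}
  have hc1 := continuous_fstw (k := k)
  have hc2 := continuous_sndw (k := k)
  have hSc : IsCompact S := by
    apply Metric.isCompact_of_isClosed_isBounded
    · refine (isClosed_le continuous_const hc1).inter ((isClosed_le hc1 continuous_const).inter
        (isClosed_le (hc2.norm.pow 2) continuous_const))
    · rw [isBounded_iff_forall_norm_le]
      refine ⟨T ^ 2 + (B / δ + 1) + 1, fun z hz => ?_⟩
      have h1 := norm_mkw_sq z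
      have h2 : z.fst ^ 2 ≤ T ^ 2 := by nlinarith [hz.1, hz.2.1]
      nlinarith [hz.2.2, norm_nonneg z, sq_nonneg (‖z‖ - 1)]
  have hψc : Continuous ψ := by
    rw [hψ]; unfold psi; fun_prop
  have hin1 := hinside z1 h0 h1T hcon
  have hz1S : z1 ∈ S := ⟨h0, h1T, hin1.2.2.le⟩
  obtain ⟨z2, hz2S, hmax⟩ := hSc.exists_isMaxOn ⟨z1, hz1S⟩
    ((hD.mono (fun z hz => hz.1)).add hψc.continuousOn : ContinuousOn (fun z => D z + ψ z) S)
  have hpos2 : 0 < D z2 + ψ z2 := hcon.trans_le (hmax hz1S)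
  have hin2 := hinside z2 hz2S.1 hz2S.2.1 hpos2
  have hSn : S ∈ 𝓝 z2 := by
    have hopen : IsOpen {z : Wk k | 0 < z.fst ∧ z.fst < T ∧ ‖z.snd‖ ^ 2 < B / δ + 1} :=
      (isOpen_lt continuous_const hc1).inter ((isOpen_lt hc1 continuous_const).inter
        (isOpen_lt (hc2.norm.pow 2) continuous_const))
    filter_upwards [hopen.mem_nhds hin2] with z hz
    exact ⟨hz.1.le, hz.2.1.le, hz.2.2.le⟩
  have hnear : ∀ i, ∀ᶠ h in 𝓝[≠] (0:ℝ), z2 + h • b i ∈ S ∧ z2 - h • b i ∈ S := by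
    intro i
    refine eventually_nhdsWithin_of_eventually_nhds ?_
    have t1 : Tendsto (fun h : ℝ => z2 + h • b i) (𝓝 0) (𝓝 z2) := by
      have : Continuous (fun h : ℝ => z2 + h • b i) := by fun_prop
      simpa using this.tendsto 0
    have t2 : Tendsto (fun h : ℝ => z2 - h • b i) (𝓝 0) (𝓝 z2) := by
      have : Continuous (fun h : ℝ => z2 - h • b i) := by fun_prop
      simpa using this.tendsto 0
    exact (t1.eventually hSn).and (t2.eventually hSn)
  have hle : (0:ℝ) ≤ -(2 * δ) := by
    refine le_of_tendsto (hsd z2 hin2.1) ?_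
    filter_upwards [eventually_all.2 hnear, self_mem_nhdsWithin] with h hh hne
    have hne' : h ≠ 0 := by simpa using hne
    have key := psi_sd_sum b (B / T) δ (((k : ℝ) + 1) * T ^ 2) z2 h hne'
    rw [← key, ← Finset.sum_neg_distrib]
    refine Finset.sum_le_sum fun i _ => ?_
    rw [← neg_div]
    have m1 := hmax (hh i).1
    have m2 := hmax (hh i).2
    simp only [Set.mem_ofPred_eq, Pi.add_apply] at m1 m2
    gcongr
    change _ ≤ -(ψ (z2 + h • b i) + ψ (z2 - h • b i) - 2 * ψ z2)
    linarith
  linarith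

lemma max_principle {k : ℕ} {ι : Type*} [Fintype ι] (b : OrthonormalBasis ι ℝ (Wk k))
    (D : Wk k → ℝ) (hD : ContinuousOn D {z | 0 ≤ z.fst}) (B : ℝ) (hB0 : 0 ≤ B)
    (hB : ∀ z : Wk k, 0 ≤ z.fst → D z ≤ B)
    (hzero : ∀ z : Wk k, z.fst = 0 → D z ≤ 0)
    (hsd : ∀ z : Wk k, 0 < z.fst →
      Tendsto (fun h : ℝ => ∑ i, (D (z + h • b i) + D (z - h • b i) - 2 * D z) / h ^ 2)
        (𝓝[≠] 0) (𝓝 0))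
    (z : Wk k) (h0 : 0 ≤ z.fst) : D z ≤ 0 := by
  have h1 : ∀ T : ℝ, 0 < T → z.fst ≤ T → D z ≤ B / T * z.fst := by
    intro T hT hzT
    have hlim : Tendsto (fun δ : ℝ => B / T * z.fst
      + δ * (‖z‖ ^ 2 - ((k : ℝ) + 2) * ⟪ew k, z⟫ ^ 2 + (((k : ℝ) + 1) * T ^ 2))) (𝓝[>] 0)
        (𝓝 (B / T * z.fst)) := by
      have hc : Continuous (fun δ : ℝ => B / T * z.fst
        + δ * (‖z‖ ^ 2 - ((k : ℝ) + 2) * ⟪ew k, z⟫ ^ 2 + (((k : ℝ) + 1) * T ^ 2))) := by fun_prop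
      have := hc.tendsto 0
      rw [zero_mul, add_zero] at this
      exact this.mono_left nhdsWithin_le_nhds
    refine ge_of_tendsto hlim ?_
    filter_upwards [self_mem_nhdsWithin] with δ hδ
    have := max_principle_slab b D hD B hB0 hB hzero hsd T δ hT hδ z h0 hzT
    rw [psi, inner_ew] at this
    rw [inner_ew]
    linarith
  have hlim : Tendsto (fun T : ℝ => B / T * z.fst) atTop (𝓝 0) := by
    have := (tendsto_const_nhds (x := B)).div_atTop tendsto_id (l := (atTop : Filter ℝ))
    simpa using this.mul_const z.fst
  refine ge_of_tendsto hlim ?_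
  filter_upwards [eventually_gt_atTop 0, eventually_ge_atTop z.fst] with T h2 h3
  exact h1 T h2 h3

/-- Poisson representation. -/
lemma poisson_repr {k : ℕ} {ι : Type*} [Fintype ι] (b : OrthonormalBasis ι ℝ (Wk k))
    (V : Wk k → ℝ) (hV : ContinuousOn V {z | 0 ≤ z.fst}) (M : ℝ)
    (hM : ∀ z : Wk k, 0 ≤ z.fst → |V z| ≤ M)
    (hsd : ∀ z : Wk k, 0 < z.fst →
      Tendsto (fun h : ℝ => ∑ i, (V (z + h • b i) + V (z - h • b i) - 2 * V z) / h ^ 2)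
        (𝓝[≠] 0) (𝓝 0))
    (J : ℝ) (hJ : J = ∫ y : Eu k, (1 + ‖y‖ ^ 2) ^ (-((k : ℝ) + 1) / 2))
    (z : Wk k) (hz : 0 < z.fst) : J * V z = PI (fun y => V (mkw 0 y)) z := by
  set g : Eu k → ℝ := fun y => V (mkw 0 y) with hg
  have hgc : Continuous g := by
    refine hV.comp_continuous (continuous_mkw_right 0) fun y => ?_
    simp
  have hgM : ∀ y, |g y| ≤ M := fun y => hM _ (by simp)
  have hM0 : 0 ≤ M := (abs_nonneg _).trans (hgM 0)
  have hJ0 : 0 ≤ J := by rw [hJ]; exact integral_nonneg fun y => by positivity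
  have hcont : ContinuousOn (fun z => J * V z - PI' g z) {z | 0 ≤ z.fst} :=
    (hV.const_smul J).sub (continuous_PI' g hgc M hgM).continuousOn
  have hb : ∀ z : Wk k, 0 ≤ z.fst → |J * V z - PI' g z| ≤ 2 * J * M := by
    intro z hz
    have h1 := PI'_bound g M hgM z
    rw [← hJ] at h1
    have h2 : |J * V z| ≤ J * M := by
      rw [abs_mul, abs_of_nonneg hJ0]; exact mul_le_mul_of_nonneg_left (hM z hz) hJ0
    have := abs_sub (J * V z) (PI' g z)
    linarith
  have hz0 : ∀ z : Wk k, z.fst = 0 → J * V z - PI' g z = 0 := by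
    intro z hz
    have : z = mkw 0 z.snd := by rw [← hz]; rfl
    rw [this, PI'_zero, ← hJ, hg, sub_self]
  have hs : ∀ z : Wk k, 0 < z.fst →
      Tendsto (fun h : ℝ => ∑ i, ((J * V (z + h • b i) - PI' g (z + h • b i))
        + (J * V (z - h • b i) - PI' g (z - h • b i)) - 2 * (J * V z - PI' g z)) / h ^ 2)
        (𝓝[≠] 0) (𝓝 0) := by
    intro z hz
    have h1 := ((hsd z hz).const_mul J).sub (PI_sd b z hz g hgc M hgM)
    rw [mul_zero, sub_zero] at h1
    refine h1.congr' ?_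
    have : ∀ᶠ h in 𝓝[≠] (0:ℝ), |h| ≤ z.fst / 2 := by
      refine eventually_nhdsWithin_of_eventually_nhds ?_
      have : Tendsto (fun h : ℝ => |h|) (𝓝 0) (𝓝 0) := by
        simpa using continuous_abs.tendsto (0:ℝ)
      filter_upwards [this.eventually (gt_mem_nhds (show 0 < z.fst / 2 by positivity))] with h hh
      exact hh.le
    filter_upwards [this] with h hh
    rw [Finset.mul_sum, ← Finset.sum_sub_distrib]
    refine Finset.sum_congr rfl fun i _ => ?_
    have e2 : z - h • b i = z + (-h) • b i := by rw [neg_smul]; abel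
    rw [← PI_eq_PI' g z hz, ← PI_eq_PI' g (z + h • b i) (fst_line_pos z _ hz (b.norm_eq_one i) h hh),
      e2, ← PI_eq_PI' g (z + (-h) • b i) (fst_line_pos z _ hz (b.norm_eq_one i) (-h)
        (by rwa [abs_neg]))]
    ring
  rw [PI_eq_PI' g z hz]
  have r1 := max_principle b (fun z => J * V z - PI' g z) hcont (2 * J * M) (by positivity)
    (fun z hz => (le_abs_self _).trans (hb z hz)) (fun z hz => (hz0 z hz).le) hs z hz.le
  have r2 := max_principle b (fun z => -(J * V z - PI' g z)) hcont.neg (2 * J * M) (by positivity)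
    (fun z hz => (neg_le_abs _).trans (hb z hz)) (fun z hz => by simp [hz0 z hz])
    (fun z hz => by
      have := (hs z hz).neg
      rw [neg_zero] at this
      refine this.congr fun h => ?_
      rw [← Finset.sum_neg_distrib]
      refine Finset.sum_congr rfl fun i _ => ?_
      ring) z hz.le
  linarith

end Part6

section Part7
open scoped Topology

lemma lintegral_smul_scale {k : ℕ} (F : Eu k → ENNReal) (hF : Measurable F) (t : ℝ) (ht : t ≠ 0) :
    ∫⁻ z, F z = ENNReal.ofReal (|t| ^ k) * ∫⁻ y, F (t • y) := by
  have h := Measure.map_addHaar_smul (volume : Measure (Eu k)) ht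
  have h2 : ∫⁻ y, F (t • y) = ∫⁻ z, F z ∂(Measure.map (t • ·) (volume : Measure (Eu k))) := by
    rw [lintegral_map hF (measurable_const_smul t)]
  have hp : 0 < |t| ^ k := by positivity
  rw [h2, h, lintegral_smul_measure, smul_eq_mul, ← mul_assoc, ← ENNReal.ofReal_mul hp.le]
  simp only [finrank_euclideanSpace, Fintype.card_fin, abs_inv, abs_pow]
  rw [mul_inv_cancel₀ hp.ne', ENNReal.ofReal_one, one_mul]

lemma lintegral_gauss (k : ℕ) (c : ℝ) (hc : 0 < c) :
    ∫⁻ t : ℝ, ENNReal.ofReal (|t| ^ k * Real.exp (-c * t ^ 2))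
      = ENNReal.ofReal (Real.Gamma (((k : ℝ) + 1) / 2) * c ^ (-((k : ℝ) + 1) / 2)) := by
  have hi : Integrable (fun t : ℝ => |t| ^ k * Real.exp (-c * t ^ 2)) := by
    have := (integrable_rpow_mul_exp_neg_mul_sq hc (s := k)
      (by have : (0:ℝ) ≤ k := by positivity
          linarith)).norm
    refine this.congr (Eventually.of_forall fun t => ?_)
    simp
  rw [← ofReal_integral_eq_lintegral_ofReal hi (Eventually.of_forall fun t => by positivity)]
  congr 1
  have h1 : ∫ t : ℝ, |t| ^ k * Real.exp (-c * t ^ 2)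
      = ∫ t : ℝ, (fun s : ℝ => s ^ k * Real.exp (-c * s ^ 2)) |t| := by
    simp
  rw [h1, integral_comp_abs (f := fun s : ℝ => s ^ k * Real.exp (-c * s ^ 2))]
  have h2 := integral_rpow_mul_exp_neg_mul_rpow (p := 2) (q := k) (b := c) (by norm_num)
    (by have : (0:ℝ) ≤ k := by positivity
        linarith) hc
  simp only [Real.rpow_natCast, Real.rpow_two] at h2
  rw [h2]
  ring

lemma lintegral_Wk {k : ℕ} (F : Wk k → ENNReal) (hF : Measurable F) :
    ∫⁻ z, F z = ∫⁻ t : ℝ, ∫⁻ y : Eu k, F (mkw t y) := by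
  have h := (WithLp.volume_preserving_toLp ℝ (Eu k))
  rw [← h.lintegral_comp hF]
  rw [Measure.volume_eq_prod]
  exact lintegral_prod _ (hF.comp h.measurable).aemeasurable

lemma cone {k : ℕ} (q : Wk k → ENNReal) (hq : Measurable q)
    (hom : ∀ (s : ℝ) (z : Wk k), s ≠ 0 → q (s • z) = q z) :
    ∫⁻ z, q z * ENNReal.ofReal (Real.exp (-‖z‖ ^ 2))
      = ENNReal.ofReal (Real.Gamma (((k : ℝ) + 1) / 2)) *
        ∫⁻ y : Eu k, q (mkw 1 y) * ENNReal.ofReal ((1 + ‖y‖ ^ 2) ^ (-((k : ℝ) + 1) / 2)) := by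
  have hm : Measurable (fun z : Wk k => q z * ENNReal.ofReal (Real.exp (-‖z‖ ^ 2))) := by
    fun_prop
  have hmk : Measurable (fun p : ℝ × Eu k => mkw p.1 p.2) := continuous_mkw.measurable
  have hmk1 : ∀ t, Measurable (fun y : Eu k => mkw t y) := fun t =>
    (continuous_mkw_right t).measurable
  have hq1 : Measurable (fun y : Eu k => q (mkw 1 y)) := hq.comp (hmk1 1)
  rw [lintegral_Wk _ hm]
  have h1 : ∀ᵐ t : ℝ, ∫⁻ y : Eu k, q (mkw t y) * ENNReal.ofReal (Real.exp (-‖mkw t y‖ ^ 2))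
      = ∫⁻ y : Eu k, q (mkw 1 y) *
        ENNReal.ofReal (|t| ^ k * Real.exp (-(1 + ‖y‖ ^ 2) * t ^ 2)) := by
    filter_upwards [Measure.ae_ne volume (0:ℝ)] with t ht
    refine (lintegral_smul_scale _ (hm.comp (hmk1 t)) t ht).trans ?_
    rw [← lintegral_const_mul]
    · refine lintegral_congr fun y => ?_
      have e1 : mkw t (t • y) = t • mkw 1 y := by simp [mkw, ← WithLp.toLp_smul]
      have e2 : ‖t • mkw 1 y‖ ^ 2 = (1 + ‖y‖ ^ 2) * t ^ 2 := by
        rw [norm_smul, mul_pow, norm_mkw_sq]; simp; ring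
      simp only [Function.comp]
      rw [e1, hom _ _ ht, e2, ENNReal.ofReal_mul (by positivity), neg_mul]
      ring
    · exact (hm.comp (hmk1 t)).comp (measurable_const_smul t)
  rw [lintegral_congr_ae h1, lintegral_lintegral_swap]
  · rw [← lintegral_const_mul _ (by
      have := (continuous_profile k (-((k : ℝ) + 1) / 2)).measurable
      fun_prop)]
    refine lintegral_congr fun y => ?_
    rw [lintegral_const_mul _ (by fun_prop), lintegral_gauss k _ (by positivity),
      ENNReal.ofReal_mul (Real.Gamma_nonneg_of_nonneg (by positivity))]
    ring
  · refine Measurable.aemeasurable ?_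
    refine (hq1.comp measurable_snd).mul ?_
    fun_prop

/-- The quadratic symbol. -/
def qf {k : ℕ} (f z : Wk k) : ℝ := |‖f‖ ^ 2 - ((k : ℝ) + 1) * ⟪z, f⟫ ^ 2 / ‖z‖ ^ 2|

lemma measurable_qf {k : ℕ} (f : Wk k) : Measurable (qf f) := by
  unfold qf
  have : Measurable (fun z : Wk k => ⟪z, f⟫) := Continuous.measurable (by fun_prop)
  fun_prop

lemma qf_hom {k : ℕ} (f : Wk k) (s : ℝ) (z : Wk k) (hs : s ≠ 0) : qf f (s • z) = qf f z := by
  unfold qf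
  rw [norm_smul, inner_smul_left, mul_pow, mul_pow, Real.norm_eq_abs, sq_abs]
  simp only [conj_trivial]
  congr 2
  rw [mul_left_comm, mul_div_mul_left _ _ (by positivity)]

lemma qf_rot {k : ℕ} (f : Wk k) :
    ∫⁻ z, ENNReal.ofReal (qf f z) * ENNReal.ofReal (Real.exp (-‖z‖ ^ 2))
      = ENNReal.ofReal (‖f‖ ^ 2) *
        ∫⁻ z, ENNReal.ofReal (qf (ew k) z) * ENNReal.ofReal (Real.exp (-‖z‖ ^ 2)) := by
  have hn : ‖‖f‖ • ew k‖ = ‖f‖ := by rw [norm_smul, norm_ew]; simp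
  let R : Wk k ≃ₗᵢ[ℝ] Wk k := (ℝ ∙ (‖f‖ • ew k - f))ᗮ.reflection
  have hR : R (‖f‖ • ew k) = f := Submodule.reflection_sub hn
  have hm : ∀ f : Wk k, Measurable (fun z : Wk k => ENNReal.ofReal (qf f z) *
      ENNReal.ofReal (Real.exp (-‖z‖ ^ 2))) := by
    intro f
    have := measurable_qf f
    fun_prop
  rw [← R.measurePreserving.lintegral_comp (hm f), ← lintegral_const_mul _ (hm _)]
  refine lintegral_congr fun z => ?_
  rw [← mul_assoc, ← ENNReal.ofReal_mul (sq_nonneg _), R.norm_map]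
  congr 2
  unfold qf
  have e1 : ⟪R z, f⟫ = ‖f‖ * ⟪z, ew k⟫ := by
    rw [← hR, R.inner_map_map, inner_smul_right]
    rw [hR]
  rw [e1, R.norm_map, norm_ew]
  nth_rewrite 2 [← abs_of_nonneg (sq_nonneg ‖f‖)]
  rw [← abs_mul]
  congr 1
  ring

lemma lint_qf {k : ℕ} (f : Wk k) :
    ∫⁻ y : Eu k, ENNReal.ofReal (qf f (mkw 1 y) * (1 + ‖y‖ ^ 2) ^ (-((k : ℝ) + 1) / 2))
      = ENNReal.ofReal (‖f‖ ^ 2) *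
      ∫⁻ y : Eu k, ENNReal.ofReal (qf (ew k) (mkw 1 y) * (1 + ‖y‖ ^ 2) ^ (-((k : ℝ) + 1) / 2)) := by
  have h := qf_rot f
  have hc : ∀ f : Wk k, _ := fun f => cone (fun z => ENNReal.ofReal (qf f z))
    (measurable_qf f).ennreal_ofReal (fun s z hs => by rw [qf_hom f s z hs])
  rw [hc, hc, mul_left_comm] at h
  have hG : 0 < Real.Gamma (((k : ℝ) + 1) / 2) := Real.Gamma_pos_of_pos (by positivity)
  have h2 := (ENNReal.mul_right_inj (by simpa using hG) ENNReal.ofReal_ne_top).1 h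
  have e : ∀ (f : Wk k) (y : Eu k), ENNReal.ofReal (qf f (mkw 1 y) * (1 + ‖y‖ ^ 2) ^ (-((k : ℝ) + 1) / 2))
    = ENNReal.ofReal (qf f (mkw 1 y)) * ENNReal.ofReal ((1 + ‖y‖ ^ 2) ^ (-((k : ℝ) + 1) / 2)) :=
    fun f y => ENNReal.ofReal_mul (abs_nonneg _)
  simp only [e]
  exact h2

lemma integrable_qf {k : ℕ} (f : Wk k) :
    Integrable (fun y : Eu k => qf f (mkw 1 y) * (1 + ‖y‖ ^ 2) ^ (-((k : ℝ) + 1) / 2)) := by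
  refine ((integrable_profile k).const_mul (‖f‖ ^ 2 + ((k : ℝ) + 1) * ‖f‖ ^ 2)).mono'
    (((measurable_qf f).comp (continuous_mkw_right 1).measurable).mul
      (continuous_profile k _).measurable).aestronglyMeasurable (Eventually.of_forall fun y => ?_)
  rw [norm_mul, Real.norm_of_nonneg (show 0 ≤ (1 + ‖y‖ ^ 2) ^ (-((k : ℝ) + 1) / 2) by positivity)]
  gcongr
  unfold qf
  rw [Real.norm_eq_abs, abs_abs]
  have h1 : ⟪mkw 1 y, f⟫ ^ 2 / ‖mkw 1 y‖ ^ 2 ≤ ‖f‖ ^ 2 := by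
    apply div_le_of_le_mul₀ (by positivity) (by positivity)
    have := abs_real_inner_le_norm (mkw 1 y) f
    rw [← sq_abs]
    calc |⟪mkw 1 y, f⟫| ^ 2 ≤ (‖mkw 1 y‖ * ‖f‖) ^ 2 := by gcongr
      _ = _ := by ring
  refine (abs_sub _ _).trans ?_
  rw [abs_of_nonneg (by positivity), abs_of_nonneg (by positivity), mul_div_assoc]
  gcongr

lemma int_qf {k : ℕ} (f : Wk k) :
    ∫ y : Eu k, qf f (mkw 1 y) * (1 + ‖y‖ ^ 2) ^ (-((k : ℝ) + 1) / 2)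
      = ‖f‖ ^ 2 *
      ∫ y : Eu k, qf (ew k) (mkw 1 y) * (1 + ‖y‖ ^ 2) ^ (-((k : ℝ) + 1) / 2) := by
  have hp : ∀ f : Wk k, 0 ≤ᵐ[volume] (fun y : Eu k => qf f (mkw 1 y) * (1 + ‖y‖ ^ 2) ^ (-((k : ℝ) + 1) / 2)) :=
    fun f => Eventually.of_forall fun y => mul_nonneg (abs_nonneg _) (by positivity)
  rw [integral_eq_lintegral_of_nonneg_ae (hp f) (integrable_qf f).aestronglyMeasurable,
    integral_eq_lintegral_of_nonneg_ae (hp _) (integrable_qf _).aestronglyMeasurable,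
    lint_qf, ENNReal.toReal_mul, ENNReal.toReal_ofReal (by positivity)]

lemma J_eq (k : ℕ) : ∫ y : Eu k, (1 + ‖y‖ ^ 2) ^ (-((k : ℝ) + 1) / 2) = sphereArea (k + 1) / 2 := by
  have h := cone (k := k) (fun _ => 1) measurable_const (fun _ _ _ => rfl)
  simp only [one_mul] at h
  have hG : 0 < Real.Gamma (((k : ℝ) + 1) / 2) := Real.Gamma_pos_of_pos (by positivity)
  have hI := GaussianFourier.integral_rexp_neg_mul_sq_norm (V := Wk k) (b := 1) one_pos
  rw [finrank_Wk] at hI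
  have hint : Integrable (fun z : Wk k => Real.exp (-‖z‖ ^ 2)) := by
    by_contra hc
    rw [integral_undef (by simpa using hc)] at hI
    have : (0:ℝ) < (π / 1) ^ (((k + 1 : ℕ) : ℝ) / 2) := by positivity
    linarith
  rw [← ofReal_integral_eq_lintegral_ofReal hint (Eventually.of_forall fun t => by positivity),
    ← ofReal_integral_eq_lintegral_ofReal (integrable_profile k)
      (Eventually.of_forall fun t => by positivity), ← ENNReal.ofReal_mul hG.le,
      ENNReal.ofReal_eq_ofReal_iff (integral_nonneg fun z => by positivity)
        (mul_nonneg hG.le (integral_nonneg fun z => by positivity))] at h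
  simp only [neg_mul, one_mul, div_one] at hI
  rw [hI] at h
  unfold sphereArea
  push_cast at h ⊢
  rw [mul_div_assoc, mul_div_cancel_left₀ _ two_ne_zero, eq_div_iff hG.ne', h, mul_comm]

end Part7

section Part8
open scoped Topology

/-- The radial primitive. -/
def Gr (j : ℕ) (r : ℝ) : ℝ := r ^ (j + 1) * (1 + r ^ 2) ^ (-((j : ℝ) + 2) / 2)

/-- Its derivative. -/
def Gr' (j : ℕ) (r : ℝ) : ℝ :=
  r ^ j * ((((j : ℝ) + 1) - r ^ 2) / (1 + r ^ 2)) * (1 + r ^ 2) ^ (-((j : ℝ) + 2) / 2)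

lemma hasDerivAt_Gr (j : ℕ) (r : ℝ) : HasDerivAt (Gr j) (Gr' j r) r := by
  have hp : 0 < 1 + r ^ 2 := by positivity
  have h1 : HasDerivAt (fun r : ℝ => 1 + r ^ 2) (2 * r) r := by
    simpa using (hasDerivAt_pow 2 r).const_add 1
  have h2 := h1.rpow_const (p := -((j : ℝ) + 2) / 2) (Or.inl hp.ne')
  refine ((hasDerivAt_pow (j + 1) r).mul h2).congr_deriv ?_
  rw [Real.rpow_sub_one hp.ne', Gr']
  push_cast
  field_simp
  ring

lemma continuous_Gr' (j : ℕ) : Continuous (Gr' j) := by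
  unfold Gr'
  have h1 : Continuous (fun r : ℝ => (1 + r ^ 2) ^ (-((j : ℝ) + 2) / 2)) :=
    Continuous.rpow_const (by fun_prop) fun y => Or.inl (by positivity)
  have h2 : Continuous (fun r : ℝ => (((j : ℝ) + 1) - r ^ 2) / (1 + r ^ 2)) :=
    Continuous.div (by fun_prop) (by fun_prop) fun r => by positivity
  fun_prop

lemma tendsto_Gr (j : ℕ) : Tendsto (Gr j) atTop (𝓝 0) := by
  refine squeeze_zero' (g := fun r : ℝ => r⁻¹) ?_ ?_ tendsto_inv_atTop_zero
  · filter_upwards [eventually_gt_atTop 0] with r hr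
    unfold Gr; positivity
  · filter_upwards [eventually_gt_atTop 0] with r hr
    unfold Gr
    have h1 : (1 + r ^ 2) ^ (-((j : ℝ) + 2) / 2) ≤ (r ^ 2) ^ (-((j : ℝ) + 2) / 2) := by
      apply Real.rpow_le_rpow_of_nonpos (by positivity) (by linarith)
      have : (0:ℝ) ≤ j := by positivity
      linarith
    have h2 : (r ^ 2) ^ (-((j : ℝ) + 2) / 2) = (r ^ (j + 2))⁻¹ := by
      rw [← Real.rpow_natCast r 2, ← Real.rpow_mul hr.le, ← Real.rpow_natCast r (j + 2),
        ← Real.rpow_neg hr.le]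
      congr 1
      push_cast; ring
    calc r ^ (j + 1) * (1 + r ^ 2) ^ (-((j : ℝ) + 2) / 2) ≤ r ^ (j + 1) * (r ^ (j + 2))⁻¹ := by
          rw [← h2]; gcongr
      _ = r⁻¹ := by rw [pow_succ r (j + 1)]; field_simp

lemma radial_integral (j : ℕ) :
    ∫ r in Set.Ioi (0:ℝ), |Gr' j r| = 2 * Gr j (√((j : ℝ) + 1)) := by
  set a := √((j : ℝ) + 1) with ha
  have ha2 : a ^ 2 = (j : ℝ) + 1 := Real.sq_sqrt (by positivity)
  have ha0 : 0 ≤ a := Real.sqrt_nonneg _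
  have hpos : ∀ r, 0 ≤ r → r ≤ a → 0 ≤ Gr' j r := by
    intro r hr hra
    unfold Gr'
    have : 0 ≤ ((j : ℝ) + 1) - r ^ 2 := by nlinarith
    positivity
  have hneg : ∀ r, a ≤ r → Gr' j r ≤ 0 := by
    intro r hra
    have hr : 0 ≤ r := ha0.trans hra
    unfold Gr'
    have h1 : (((j : ℝ) + 1) - r ^ 2) / (1 + r ^ 2) ≤ 0 :=
      div_nonpos_of_nonpos_of_nonneg (by nlinarith) (by positivity)
    have h2 : 0 ≤ (1 + r ^ 2) ^ (-((j : ℝ) + 2) / 2) := by positivity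
    have h3 : 0 ≤ r ^ j := by positivity
    exact mul_nonpos_of_nonpos_of_nonneg (mul_nonpos_of_nonneg_of_nonpos h3 h1) h2
  have hint := integrableOn_Ioi_deriv_of_nonpos' (a := a) (fun x _ => hasDerivAt_Gr j x)
    (fun x hx => hneg x (le_of_lt hx)) (tendsto_Gr j)
  rw [← intervalIntegral.integral_interval_add_Ioi' (b := a)
    ((continuous_Gr' j).abs.intervalIntegrable _ _) hint.norm]
  have i1 : ∫ r in (0:ℝ)..a, |Gr' j r| = Gr j a := by
    have : ∫ r in (0:ℝ)..a, |Gr' j r| = ∫ r in (0:ℝ)..a, Gr' j r := by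
      refine intervalIntegral.integral_congr fun r hr => ?_
      rw [Set.uIcc_of_le ha0] at hr
      exact abs_of_nonneg (hpos r hr.1 hr.2)
    rw [this, intervalIntegral.integral_eq_sub_of_hasDerivAt (fun x _ => hasDerivAt_Gr j x)
      ((continuous_Gr' j).intervalIntegrable _ _)]
    simp [Gr]
  have i2 : ∫ r in Set.Ioi a, |Gr' j r| = Gr j a := by
    have : ∫ r in Set.Ioi a, |Gr' j r| = ∫ r in Set.Ioi a, -Gr' j r := by
      refine setIntegral_congr_fun measurableSet_Ioi fun r hr => ?_
      exact abs_of_nonpos (hneg r (le_of_lt hr))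
    rw [this, integral_neg, integral_Ioi_of_hasDerivAt_of_nonpos' (a := a)
      (fun x _ => hasDerivAt_Gr j x) (fun x hx => hneg x (le_of_lt hx)) (tendsto_Gr j)]
    simp
  rw [i1, i2]; ring

lemma ball_area (j : ℕ) :
    ((j : ℝ) + 1) * (volume : Measure (Eu (j + 1))).real (ball 0 1) = sphereArea (j + 1) := by
  rw [measureReal_def, EuclideanSpace.volume_ball]
  have hG : 0 < Real.Gamma (((j : ℝ) + 1) / 2) := Real.Gamma_pos_of_pos (by positivity)
  have h1 : Real.Gamma (((j : ℝ) + 1) / 2 + 1) = ((j : ℝ) + 1) / 2 * Real.Gamma (((j : ℝ) + 1) / 2) :=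
    Real.Gamma_add_one (by positivity)
  have h2 : √π ^ (j + 1) = π ^ (((j : ℝ) + 1) / 2) := by
    rw [Real.sqrt_eq_rpow, ← Real.rpow_natCast, ← Real.rpow_mul pi_pos.le]
    congr 1
    push_cast; ring
  simp only [ENNReal.ofReal_one, one_pow, one_mul, Fintype.card_fin]
  unfold sphereArea
  push_cast
  rw [h1, h2, ENNReal.toReal_ofReal (by positivity)]
  field_simp

lemma I_eq (j : ℕ) :
    ∫ y : Eu (j + 1), qf (ew (j + 1)) (mkw 1 y) * (1 + ‖y‖ ^ 2) ^ (-(((j + 1 : ℕ) : ℝ) + 1) / 2)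
      = 2 * sphereArea (j + 1) * Gr j (√((j : ℝ) + 1)) := by
  have h1 : ∀ y : Eu (j + 1), qf (ew (j + 1)) (mkw 1 y) *
      (1 + ‖y‖ ^ 2) ^ (-(((j + 1 : ℕ) : ℝ) + 1) / 2) =
      (fun r : ℝ => |(((j : ℝ) + 1) - r ^ 2) / (1 + r ^ 2)| * (1 + r ^ 2) ^ (-((j : ℝ) + 2) / 2)) ‖y‖ := by
    intro y
    unfold qf
    rw [real_inner_comm, inner_ew, norm_ew, norm_mkw_sq]
    simp only [mkw_fst, mkw_snd]
    have hp : 0 < 1 + ‖y‖ ^ 2 := by positivity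
    rw [← abs_neg]
    push_cast
    congr 2
    · field_simp
      ring
    · ring
  simp only [h1]
  rw [integral_fun_norm_addHaar volume (fun r : ℝ => |(((j : ℝ) + 1) - r ^ 2) / (1 + r ^ 2)| *
    (1 + r ^ 2) ^ (-((j : ℝ) + 2) / 2))]
  simp only [finrank_euclideanSpace, Fintype.card_fin, Nat.add_sub_cancel, smul_eq_mul, nsmul_eq_mul]
  have h2 : ∫ r in Set.Ioi (0:ℝ), r ^ j * (|(((j : ℝ) + 1) - r ^ 2) / (1 + r ^ 2)| *
      (1 + r ^ 2) ^ (-((j : ℝ) + 2) / 2)) = ∫ r in Set.Ioi (0:ℝ), |Gr' j r| := by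
    refine setIntegral_congr_fun measurableSet_Ioi fun r hr => ?_
    have hr' : 0 < r := hr
    simp only [Gr', abs_mul]
    rw [abs_of_nonneg (show 0 ≤ r ^ j by positivity),
      abs_of_nonneg (show 0 ≤ (1 + r ^ 2) ^ (-((j : ℝ) + 2) / 2) by positivity)]
    ring
  rw [h2, radial_integral, ← ball_area]
  push_cast
  ring

lemma Gr_val (j : ℕ) : Gr j (√((j : ℝ) + 1))
    = ((j : ℝ) + 1) ^ (((j : ℝ) + 1) / 2) / ((j : ℝ) + 2) ^ (((j : ℝ) + 2) / 2) := by
  unfold Gr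
  rw [Real.sq_sqrt (by positivity), neg_div, Real.rpow_neg (by positivity), div_eq_mul_inv,
    Real.sqrt_eq_rpow, ← Real.rpow_natCast, ← Real.rpow_mul (by positivity)]
  congr 2
  · push_cast; ring
  · congr 1; ring

lemma const_eq (j : ℕ) :
    (2 * sphereArea (j + 1) * Gr j (√((j : ℝ) + 1))) / (sphereArea (j + 1 + 1) / 2)
      = Cconst (j + 1 + 1) := by
  rw [Gr_val, Cconst]
  have e1 : j + 1 + 1 - 1 = j + 1 := rfl
  have e2 : ((j + 1 + 1 : ℕ) : ℝ) = (j : ℝ) + 2 := by push_cast; ring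
  have e3 : (j : ℝ) + 2 - 1 = j + 1 := by ring
  rw [e1, e2, e3]
  have hs : 0 < sphereArea (j + 1 + 1) := by
    unfold sphereArea
    have := Real.Gamma_pos_of_pos (s := ((j + 1 + 1 : ℕ) : ℝ) / 2) (by positivity)
    positivity
  field_simp
  ring

lemma pk1_le_qf {k : ℕ} (b w : Wk k) (hw : w ≠ 0) :
    |pk1 (ew k) ((k : ℝ) + 1) b w| ≤
      1 / 4 * (qf (ew k + b) w + qf (ew k - b) w) * (‖w‖ ^ 2) ^ (-((k : ℝ) + 1) / 2) := by
  have hp : 0 < ‖w‖ := norm_pos_iff.2 hw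
  have h1 : pk1 (ew k) ((k : ℝ) + 1) b w = 1 / 4 *
      ((‖ew k + b‖ ^ 2 - ((k : ℝ) + 1) * ⟪w, ew k + b⟫ ^ 2 / ‖w‖ ^ 2)
      - (‖ew k - b‖ ^ 2 - ((k : ℝ) + 1) * ⟪w, ew k - b⟫ ^ 2 / ‖w‖ ^ 2)) *
      (‖w‖ ^ 2) ^ (-((k : ℝ) + 1) / 2) := by
    unfold pk1
    rw [rpow_sub_one_eq w _ hw, norm_add_sq_real, norm_sub_sq_real, inner_add_right,
      inner_sub_right, real_inner_comm w (ew k)]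
    field_simp
    ring
  rw [h1, abs_mul, abs_mul, abs_of_nonneg (show (0:ℝ) ≤ 1 / 4 by norm_num),
    abs_of_nonneg (show 0 ≤ (‖w‖ ^ 2) ^ (-((k : ℝ) + 1) / 2) by positivity)]
  gcongr
  exact abs_sub _ _

lemma pk1_smul {k : ℕ} (b w : Wk k) (hw : w ≠ 0) (t : ℝ) (ht : 0 < t) :
    pk1 (ew k) ((k : ℝ) + 1) b (t • w) = (t ^ (k + 1))⁻¹ * pk1 (ew k) ((k : ℝ) + 1) b w := by
  have hp : 0 < ‖w‖ := norm_pos_iff.2 hw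
  have hne : t • w ≠ 0 := smul_ne_zero ht.ne' hw
  have h2 : (‖t • w‖ ^ 2) ^ (-((k : ℝ) + 1) / 2) =
      (t ^ (k + 1))⁻¹ * (‖w‖ ^ 2) ^ (-((k : ℝ) + 1) / 2) := by
    rw [norm_smul, mul_pow, Real.mul_rpow (by positivity) (by positivity), Real.norm_of_nonneg ht.le]
    congr 1
    rw [← Real.rpow_natCast t 2, ← Real.rpow_mul ht.le, ← Real.rpow_natCast t (k + 1),
        ← Real.rpow_neg ht.le]
    congr 1
    push_cast; ring
  unfold pk1
  rw [rpow_sub_one_eq _ _ hne, rpow_sub_one_eq w _ hw, h2, norm_smul, inner_smul_left,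
    inner_smul_right, Real.norm_of_nonneg ht.le]
  simp only [conj_trivial]
  field_simp

lemma ker_bound {k : ℕ} (z b : Wk k) (hz : 0 < z.fst) (hb : ‖b‖ = 1) :
    ∫ y, |pk1 (ew k) ((k : ℝ) + 1) b (z - mkw 0 y)| ≤
      (∫ y : Eu k, qf (ew k) (mkw 1 y) * (1 + ‖y‖ ^ 2) ^ (-((k : ℝ) + 1) / 2)) / z.fst := by
  set t := z.fst with ht
  set I := ∫ y : Eu k, qf (ew k) (mkw 1 y) * (1 + ‖y‖ ^ 2) ^ (-((k : ℝ) + 1) / 2) with hI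
  rw [integral_scale _ z.snd t hz]
  have e1 : ∀ y : Eu k, z - mkw 0 (z.snd + t • y) = t • mkw 1 (-y) := by
    intro y
    rw [← mkw_eta z]
    simp only [mkw, ← WithLp.toLp_smul, ← WithLp.toLp_sub]
    simp [ht]
  have hne : ∀ y : Eu k, mkw 1 y ≠ 0 := by
    intro y h
    have := congrArg (fun w : Wk k => w.fst) h
    simp at this
  have hF : Integrable (fun y : Eu k => 1 / 4 * (qf (ew k + b) (mkw 1 y) + qf (ew k - b) (mkw 1 y)) *
      (1 + ‖y‖ ^ 2) ^ (-((k : ℝ) + 1) / 2)) := by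
    refine (((integrable_qf (ew k + b)).add (integrable_qf (ew k - b))).const_mul (1 / 4)).congr
      (Eventually.of_forall fun y => ?_)
    simp only [Pi.add_apply]
    ring
  have hFI : ∫ y : Eu k, 1 / 4 * (qf (ew k + b) (mkw 1 y) + qf (ew k - b) (mkw 1 y)) *
      (1 + ‖y‖ ^ 2) ^ (-((k : ℝ) + 1) / 2) = I := by
    have : ∫ y : Eu k, 1 / 4 * (qf (ew k + b) (mkw 1 y) + qf (ew k - b) (mkw 1 y)) *
      (1 + ‖y‖ ^ 2) ^ (-((k : ℝ) + 1) / 2) = ∫ y : Eu k, 1 / 4 *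
        (qf (ew k + b) (mkw 1 y) * (1 + ‖y‖ ^ 2) ^ (-((k : ℝ) + 1) / 2) +
        qf (ew k - b) (mkw 1 y) * (1 + ‖y‖ ^ 2) ^ (-((k : ℝ) + 1) / 2)) := by
      congr 1; ext y; ring
    rw [this, integral_const_mul, integral_add (integrable_qf _) (integrable_qf _), int_qf, 
      int_qf (ew k - b), ← hI, norm_add_sq_real, norm_sub_sq_real, norm_ew, hb]
    ring
  have h2 : ∫ y : Eu k, |pk1 (ew k) ((k : ℝ) + 1) b (z - mkw 0 (z.snd + t • y))| ≤
      (t ^ (k + 1))⁻¹ * I := by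
    rw [← hFI, ← integral_neg_eq_self, ← integral_const_mul]
    refine integral_mono_of_nonneg (Eventually.of_forall fun y => abs_nonneg _)
      (hF.const_mul _) (Eventually.of_forall fun y => ?_)
    simp only
    rw [e1, neg_neg, pk1_smul _ _ (hne _) t hz, abs_mul,
      abs_of_nonneg (show 0 ≤ (t ^ (k + 1))⁻¹ by positivity)]
    gcongr
    refine (pk1_le_qf b _ (hne _)).trans (le_of_eq ?_)
    rw [norm_mkw_sq]
    simp
  calc _ ≤ t ^ k * ((t ^ (k + 1))⁻¹ * I) := by gcongr
    _ = I / t := by rw [pow_succ]; field_simp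

/-- Gradient estimate in the half-space model. -/
lemma model_bound {j : ℕ} {ι : Type*} [Fintype ι] (b : OrthonormalBasis ι ℝ (Wk (j + 1)))
    (V : Wk (j + 1) → ℝ) (hV : ContinuousOn V {z | 0 ≤ z.fst}) (M : ℝ)
    (hM : ∀ z : Wk (j + 1), 0 ≤ z.fst → |V z| ≤ M)
    (hsd : ∀ z : Wk (j + 1), 0 < z.fst →
      Tendsto (fun h : ℝ => ∑ i, (V (z + h • b i) + V (z - h • b i) - 2 * V z) / h ^ 2)
        (𝓝[≠] 0) (𝓝 0))
    (z : Wk (j + 1)) (hz : 0 < z.fst) (l : Wk (j + 1)) (hl : ‖l‖ = 1) (D : ℝ)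
    (hD : HasDerivAt (fun s : ℝ => V (z + s • l)) D 0) :
    |D| ≤ Cconst (j + 1 + 1) / z.fst * M := by
  set J := ∫ y : Eu (j + 1), (1 + ‖y‖ ^ 2) ^ (-(((j + 1 : ℕ) : ℝ) + 1) / 2) with hJ
  have hJe : J = sphereArea (j + 1 + 1) / 2 := J_eq (j + 1)
  have hs : 0 < sphereArea (j + 1 + 1) := by
    unfold sphereArea
    have := Real.Gamma_pos_of_pos (s := ((j + 1 + 1 : ℕ) : ℝ) / 2) (by positivity)
    positivity
  have hJ0 : 0 < J := by rw [hJe]; positivity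
  set g : Eu (j + 1) → ℝ := fun y => V (mkw 0 y) with hg
  have hgc : Continuous g := by
    refine hV.comp_continuous (continuous_mkw_right 0) fun y => ?_
    simp
  have hgM : ∀ y, |g y| ≤ M := fun y => hM _ (by simp)
  have hM0 : 0 ≤ M := (abs_nonneg _).trans (hgM 0)
  obtain ⟨hi, hd⟩ := PI_deriv z l hz hl g hgc M hgM
  have hd2 : HasDerivAt (fun s : ℝ => PI g (z + s • l)) (J * D) 0 := by
    refine (hD.const_mul J).congr_of_eventuallyEq ?_
    have : Tendsto (fun h : ℝ => |h|) (𝓝 0) (𝓝 0) := by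
      simpa using continuous_abs.tendsto (0:ℝ)
    filter_upwards [this.eventually (gt_mem_nhds (show 0 < z.fst / 2 by positivity))] with h hh
    exact (poisson_repr b V hV M hM hsd J hJ _ (fst_line_pos z l hz hl h hh.le)).symm
  have heq := hd2.unique hd
  have h3 : |J * D| ≤ (2 * sphereArea (j + 1) * Gr j (√((j : ℝ) + 1))) / z.fst * M := by
    rw [heq, ← Real.norm_eq_abs]
    refine (norm_integral_le_of_norm_le (hi.norm.mul_const M)
      (Eventually.of_forall fun y => ?_)).trans ?_
    · rw [norm_mul]
      gcongr
      exact hgM y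
    · rw [integral_mul_const]
      gcongr
      rw [← I_eq]
      exact ker_bound z l hz hl
  rw [← const_eq, ← hJe]
  rw [abs_mul, abs_of_pos hJ0, mul_comm, ← le_div_iff₀ hJ0] at h3
  refine h3.trans (le_of_eq ?_)
  ring

end Part8

section Part9
open scoped Topology

lemma exists_isom (k : ℕ) (e : Eu (k + 1)) (he : ‖e‖ = 1) :
    ∃ Φ : Wk k ≃ₗᵢ[ℝ] Eu (k + 1), Φ (ew k) = e := by
  let Ψ : Wk k ≃ₗᵢ[ℝ] Eu (k + 1) := (stdOrthonormalBasis ℝ (Wk k)).equiv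
    (EuclideanSpace.basisFun (Fin (k + 1)) ℝ) (finCongr (finrank_Wk k))
  have hn : ‖Ψ (ew k)‖ = ‖e‖ := by rw [Ψ.norm_map, norm_ew, he]
  refine ⟨Ψ.trans (ℝ ∙ (Ψ (ew k) - e))ᗮ.reflection, ?_⟩
  exact Submodule.reflection_sub hn

lemma Cconst_nonneg (j : ℕ) : 0 ≤ Cconst (j + 1 + 1) := by
  have hs : ∀ i : ℕ, 0 < sphereArea (i + 1) := by
    intro i
    unfold sphereArea
    have := Real.Gamma_pos_of_pos (s := ((i + 1 : ℕ) : ℝ) / 2) (by positivity)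
    positivity
  rw [← const_eq]
  have := hs j
  have := hs (j + 1)
  unfold Gr
  positivity

lemma halfspace_bound_eps {j : ℕ} (v : Eu (j + 1 + 1) → ℝ) (Ω : Set (Eu (j + 1 + 1)))
    (hΩ : IsOpen Ω) (hv : ContDiffOn ℝ 2 v Ω)
    (hsd : ∀ y ∈ Ω, Tendsto (fun h : ℝ => ∑ i, (v (y + h • EuclideanSpace.single i 1)
      + v (y - h • EuclideanSpace.single i 1) - 2 * v y) / h ^ 2) (𝓝[≠] 0) (𝓝 0))
    (M : ℝ) (hM : ∀ y ∈ Ω, |v y| ≤ M) (p e : Eu (j + 1 + 1)) (he : ‖e‖ = 1)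
    (hsub : ∀ y, 0 < ⟪e, y - p⟫ → y ∈ Ω) (δ ε : ℝ) (hε : 0 < ε) (hεδ : ε < δ)
    (l : Eu (j + 1 + 1)) (hl : ‖l‖ = 1) :
    |fderiv ℝ v (p + δ • e) l| ≤ Cconst (j + 1 + 1) / (δ - ε) * M := by
  obtain ⟨Φ, hΦ⟩ := exists_isom (j + 1) e he
  have hmem : ∀ z : Wk (j + 1), 0 ≤ z.fst → p + ε • e + Φ z ∈ Ω := by
    intro z hz
    apply hsub
    have e1 : p + ε • e + Φ z - p = ε • e + Φ z := by abel
    have e2 : ⟪e, Φ z⟫ = z.fst := by rw [← hΦ, Φ.inner_map_map, inner_ew]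
    rw [e1, inner_add_right, inner_smul_right, e2, real_inner_self_eq_norm_sq, he]
    linarith
  have hz0 : p + ε • e + Φ (mkw (δ - ε) 0) = p + δ • e := by
    have : (mkw (δ - ε) 0 : Wk (j + 1)) = (δ - ε) • ew (j + 1) := by
      simp [ew, mkw, ← WithLp.toLp_smul]
    rw [this, map_smul, hΦ, sub_smul]
    abel
  have hx : p + δ • e ∈ Ω := by
    rw [← hz0]; exact hmem _ (by simp; linarith)
  let b : OrthonormalBasis (Fin (j + 1 + 1)) ℝ (Wk (j + 1)) :=
    (EuclideanSpace.basisFun (Fin (j + 1 + 1)) ℝ).map Φ.symm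
  have hb : ∀ i, Φ (b i) = EuclideanSpace.single i 1 := by
    intro i
    simp [b]
  have hd : DifferentiableAt ℝ v (p + δ • e) :=
    (hv.differentiableOn (by norm_num)).differentiableAt (hΩ.mem_nhds hx)
  have := model_bound b (fun z => v (p + ε • e + Φ z))
    (hv.continuousOn.comp (by
      have := Φ.continuous
      fun_prop) (fun z hz => hmem z hz)) M (fun z hz => hM _ (hmem z hz)) ?_ (mkw (δ - ε) 0)
    (by simp; linarith) (Φ.symm l) (by rw [Φ.symm.norm_map, hl]) (fderiv ℝ v (p + δ • e) l) ?_
  · simpa using this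
  · intro z hz
    have := hsd _ (hmem z hz.le)
    refine this.congr fun h => ?_
    refine Finset.sum_congr rfl fun i _ => ?_
    simp only [map_add, map_sub, map_smul, hb, add_assoc, add_sub_assoc]
  · have h1 : HasDerivAt (fun t : ℝ => v (p + δ • e + t • l)) (fderiv ℝ v (p + δ • e) l) 0 :=
      hd.hasFDerivAt.hasLineDerivAt l
    refine h1.congr_of_eventuallyEq (Eventually.of_forall fun s => ?_)
    simp only [map_add, map_smul, LinearIsometryEquiv.apply_symm_apply, ← add_assoc, hz0]

lemma halfspace_bound {j : ℕ} (v : Eu (j + 1 + 1) → ℝ) (Ω : Set (Eu (j + 1 + 1)))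
    (hΩ : IsOpen Ω) (hv : ContDiffOn ℝ 2 v Ω)
    (hsd : ∀ y ∈ Ω, Tendsto (fun h : ℝ => ∑ i, (v (y + h • EuclideanSpace.single i 1)
      + v (y - h • EuclideanSpace.single i 1) - 2 * v y) / h ^ 2) (𝓝[≠] 0) (𝓝 0))
    (M : ℝ) (hM : ∀ y ∈ Ω, |v y| ≤ M) (p e : Eu (j + 1 + 1)) (he : ‖e‖ = 1)
    (hsub : ∀ y, 0 < ⟪e, y - p⟫ → y ∈ Ω) (δ : ℝ) (hδ : 0 < δ)
    (l : Eu (j + 1 + 1)) (hl : ‖l‖ = 1) :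
    |fderiv ℝ v (p + δ • e) l| ≤ Cconst (j + 1 + 1) / δ * M := by
  have hlim : Tendsto (fun ε : ℝ => Cconst (j + 1 + 1) / (δ - ε) * M) (𝓝[>] 0)
      (𝓝 (Cconst (j + 1 + 1) / δ * M)) := by
    have h1 : Tendsto (fun ε : ℝ => δ - ε) (𝓝[>] 0) (𝓝 δ) := by
      have : Continuous (fun ε : ℝ => δ - ε) := by fun_prop
      have := this.tendsto 0
      rw [sub_zero] at this
      exact this.mono_left nhdsWithin_le_nhds
    exact (tendsto_const_nhds.div h1 hδ.ne').mul_const M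
  refine ge_of_tendsto hlim ?_
  filter_upwards [self_mem_nhdsWithin, mem_nhdsWithin_of_mem_nhds (gt_mem_nhds hδ)] with ε h1 h2
  exact halfspace_bound_eps v Ω hΩ hv hsd M hM p e he hsub δ ε h1 h2 l hl

end Part9

/-- Let `n ≥ 2`, `m ≥ 1` and `Ω = ℝⁿ \ Ḡ` with `G` a convex domain
in `ℝⁿ`. If `u : Ω → ℝ^m` has bounded harmonic components (say `|u| ≤ M` on `Ω`),
then for every `x ∈ Ω` and every unit vector `ℓ`,
`|(ℓ,∇)u(x)| ≤ (C_n / d_x) · sup_Ω |u| ≤ (C_n / d_x) · M`. -/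
theorem directional_derivative_bound_complement_convex
    (n m : ℕ) (hn : 2 ≤ n) (hm : 1 ≤ m) (G Ω : Set (Eu n))
    (hGo : IsOpen G) (hGc : Convex ℝ G) (hGne : G.Nonempty)
    (hΩ : Ω = (closure G)ᶜ)
    (u : Eu n → Eu m) (hu : ∀ j : Fin m, IsHarmonicOn (fun y => u y j) Ω)
    (M : ℝ) (hM : ∀ y ∈ Ω, ‖u y‖ ≤ M)
    (x : Eu n) (hx : x ∈ Ω) (ℓ : Eu n) (hℓ : ‖ℓ‖ = 1) :
    ‖fderiv ℝ u x ℓ‖ ≤ Cconst n / Metric.infDist x (frontier Ω) * M := by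
  obtain ⟨j, rfl⟩ : ∃ j, n = j + 1 + 1 := ⟨n - 2, by omega⟩
  have hΩo : IsOpen Ω := by rw [hΩ]; exact isClosed_closure.isOpen_compl
  have hM0 : 0 ≤ M := (norm_nonneg _).trans (hM x hx)
  -- nearest point
  obtain ⟨p, hpK, hp⟩ := exists_norm_eq_iInf_of_complete_convex hGne.closure
    isClosed_closure.isComplete hGc.closure x
  rw [norm_eq_iInf_iff_real_inner_le_zero hGc.closure hpK] at hp
  have hxp : x - p ≠ 0 := by
    intro h
    rw [sub_eq_zero] at h
    rw [hΩ, h] at hx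
    exact hx hpK
  set δ := ‖x - p‖ with hδ
  have hδ0 : 0 < δ := norm_pos_iff.2 hxp
  set e : Eu (j + 1 + 1) := δ⁻¹ • (x - p) with he
  have hen : ‖e‖ = 1 := by
    rw [he, norm_smul, norm_inv, Real.norm_of_nonneg hδ0.le, ← hδ, inv_mul_cancel₀ hδ0.ne']
  have hxe : p + δ • e = x := by
    rw [he, smul_smul, mul_inv_cancel₀ hδ0.ne', one_smul]; abel
  have hsub : ∀ y, 0 < ⟪e, y - p⟫ → y ∈ Ω := by
    intro y hy
    rw [hΩ]
    intro hyK
    have h1 := hp y hyK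
    rw [he, real_inner_smul_left] at hy
    have : δ⁻¹ * ⟪x - p, y - p⟫ ≤ 0 := mul_nonpos_of_nonneg_of_nonpos (by positivity) h1
    linarith
  have hpΩ : p ∉ Ω := by rw [hΩ]; exact fun h => h hpK
  have hpf : p ∈ frontier Ω := by
    refine ⟨?_, fun h => hpΩ (interior_subset h)⟩
    have hlim : Filter.Tendsto (fun s : ℝ => p + s • e) (nhdsWithin 0 (Set.Ioi 0)) (nhds p) := by
      have : Continuous (fun s : ℝ => p + s • e) := by fun_prop
      have := this.tendsto 0
      rw [zero_smul, add_zero] at this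
      exact this.mono_left nhdsWithin_le_nhds
    refine mem_closure_of_tendsto hlim ?_
    filter_upwards [self_mem_nhdsWithin] with s hs
    apply hsub
    rw [add_sub_cancel_left, inner_smul_right, real_inner_self_eq_norm_sq, hen]
    have : 0 < s := hs
    linarith
  have hd1 : Metric.infDist x (frontier Ω) ≤ δ := by
    rw [hδ, ← dist_eq_norm]
    exact Metric.infDist_le_dist_of_mem hpf
  have hd0 : 0 < Metric.infDist x (frontier Ω) := by
    refine (isClosed_frontier.notMem_iff_infDist_pos ⟨p, hpf⟩).1 ?_
    rw [hΩo.frontier_eq]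
    exact fun h => h.2 hx
  have hC := Cconst_nonneg j
  -- differentiability
  have hcd : ContDiffOn ℝ 2 u Ω := by
    rw [contDiffOn_euclidean]
    exact fun i => (hu i).1
  have hdiff : DifferentiableAt ℝ u x :=
    (hcd.differentiableOn (by norm_num)).differentiableAt (hΩo.mem_nhds hx)
  set D := fderiv ℝ u x ℓ with hD
  have key : ‖D‖ ≤ Cconst (j + 1 + 1) / δ * M := by
    by_cases hD0 : D = 0
    · rw [hD0, norm_zero]; positivity
    have hDp : 0 < ‖D‖ := norm_pos_iff.2 hD0
    set w : Eu m := ‖D‖⁻¹ • D with hw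
    have hwn : ‖w‖ = 1 := by
      rw [hw, norm_smul, norm_inv, norm_norm, inv_mul_cancel₀ hDp.ne']
    have hwe : ∀ y, ⟪w, u y⟫ = ∑ i, w i * u y i := by
      intro y
      simp [PiLp.inner_apply, mul_comm]
    have hb := halfspace_bound (fun y => ⟪w, u y⟫) Ω hΩo (contDiffOn_const.inner ℝ hcd) ?_ M ?_ p e
      hen hsub δ hδ0 ℓ hℓ
    · rw [hxe] at hb
      have h2 : fderiv ℝ (fun y => ⟪w, u y⟫) x ℓ = ‖D‖ := by
        rw [fderiv_inner_apply ℝ (differentiableAt_const w) hdiff]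
        simp only [fderiv_fun_const, Pi.zero_apply, _root_.zero_apply, inner_zero_left,
          add_zero]
        rw [← hD, hw, real_inner_smul_left, real_inner_self_eq_norm_sq]
        field_simp
      rw [h2, abs_of_pos hDp] at hb
      exact hb
    · intro y hy
      have h1 : ∀ i : Fin m, Filter.Tendsto (fun h : ℝ => ∑ a : Fin (j + 1 + 1),
          (u (y + h • EuclideanSpace.single a 1) i
          + u (y - h • EuclideanSpace.single a 1) i - 2 * u y i) / h ^ 2)
          (nhdsWithin 0 {0}ᶜ) (nhds 0) := by
        intro i
        have h0 := (hu i).2 y hy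
        refine Eq.subst (motive := fun c => Filter.Tendsto _ _ (nhds c)) h0 ?_
        refine tendsto_finsetSum _ fun a _ => ?_
        exact sd_contDiff (fun y => u y i) Ω hΩo (hu i).1 y hy _
      have h2 := tendsto_finsetSum Finset.univ fun i (_ : i ∈ Finset.univ) => (h1 i).const_mul (w i)
      simp only [mul_zero, Finset.sum_const_zero] at h2
      refine h2.congr fun h => ?_
      simp only [hwe, Finset.mul_sum]
      rw [Finset.sum_comm]
      refine Finset.sum_congr rfl fun a _ => ?_
      rw [← Finset.sum_add_distrib, ← Finset.sum_sub_distrib, Finset.sum_div]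
      refine Finset.sum_congr rfl fun i _ => ?_
      ring
    · intro y hy
      have := abs_real_inner_le_norm w (u y)
      rw [hwn, one_mul] at this
      exact this.trans (hM y hy)
  refine key.trans ?_
  gcongr
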